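/- arXiv:1411.3842 — 2 statements merged into one kernel-verified Lean document; each statement's English description precedes it below -/
import Mathlib

section
/- For every real number c < 8 there exists ε₀ > 0 with the following property. Let ε ∈ (0, ε₀) and let K ⊂ ℝ² be an o-symmetric convex body whose Banach–Mazur distance from ellipses is at least 1 + ε, that is, there are no invertible linear map T : ℝ² → ℝ² and λ ∈ [1, 1+ε) with T(B²) ⊆ K ⊆ λ·T(B²). Then V(K)·V(K*) ≤ π²·(1 − c·ε³). -/
/-!
The proof follows the Sturm–Liouville approach to the planar Blaschke–Santaló inequality, carried
out for inscribed polygons. Let `K` be the unit ball of a norm `N`, and let `x i` be the vertices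
of an inscribed `o`-symmetric `2 n`-gon, equally spaced in angle. With `dd x i = x i × x (i + 1)`,
every function `g i = z × x i` (`z` a fixed vector, `×` the planar determinant) solves a discrete
Hill equation whose potential `pp x i` is twice the area of a triangle of the polar polygon
(`SymPoly.hill`). Hence `S = ∑ dd` and `Q = ∑ pp`, over half a period, are the areas of the polygon
and of its polar. The polar polygon contains `K*`, and `K` is contained in the polygon dilated by a
factor which tends to `1` with the mesh (`volume_body_le`, `volume_polar_le`), so that
`V(K) V(K*)` is at most `S Q`, up to an arbitrarily small relative error.

Let `φ` be the area swept out along the polygon, normalized to increase by `π` over half a period,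
and evaluate the quadratic form of the Hill operator (`energy`) at the test functions `sin φ` and
`cos φ`. As `sin² + cos² = 1`, the two values `E₀`, `E₁` add up to at most `π² / S - Q`, that is,
`S Q ≤ π² - S (E₀ + E₁)`. Jacobi's factorization (`hill_identity`), relative to the solution `g`
which agrees with the test function on the edge where the latter changes sign, writes each `Eₖ` as
a sum of nonnegative edge terms, which gives the Blaschke–Santaló inequality. The edge terms of
`sin φ` dominate the squared increments of `log (g / sin φ)` (`edge_log`), so if `S Eₖ` is of
order `ε³`, the Cauchy–Schwarz inequality makes `g` a multiple of `sin φ` up to an error of order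
`ε ^ (3 / 2)`, which is much smaller than `ε` (`close_to_sin`). Applied to both test functions, this
yields a linear map taking the vertices to within `ε / 4` of the points of the unit circle
(`polygon_stability`), and therefore an ellipse which approximates `K` up to a factor less than
`1 + ε` (`sandwich`). So a body at distance at least `1 + ε` from the ellipses satisfies
`V(K) V(K*) ≤ π² (1 - 8 ε³)` as soon as `ε` is below an absolute constant; the deficit is in fact
of a larger order than `ε³`, which is why no sharp constants are needed.
-/

open MeasureTheory Real
open scoped Pointwise RealInnerProductSpace ENNReal

noncomputable section

abbrev E2 := EuclideanSpace ℝ (Fin 2)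

/-- The polar body `K* = {y : ⟪x,y⟫ ≤ 1 for all x ∈ K}`. -/
def polarBody (K : Set E2) : Set E2 := {y | ∀ x ∈ K, ⟪x, y⟫ ≤ 1}

/-! ### Discrete Hill equation -/

lemma sum_range_shift {n : ℕ} {F : ℕ → ℝ} (hF : ∀ i, F (i + n) = F i) (m : ℕ) :
    ∑ i ∈ Finset.range n, F (m + i) = ∑ i ∈ Finset.range n, F i := by
  induction m with
  | zero => simp
  | succ m ih =>
    rw [← ih]
    have h1 := Finset.sum_range_succ (fun i => F (m + i)) n
    have h2 := Finset.sum_range_succ' (fun i => F (m + i)) n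
    have h3 : ∀ i, F (m + 1 + i) = F (m + (i + 1)) := fun i => by congr 1; ring
    simp only [h3]
    simp only [add_zero, hF m] at h1 h2
    linarith

/-- Jacobi's factorization of the discrete quadratic form: if `g` solves the Hill equation with
potential `P` and vanishes only where `f` does, the form evaluated at `f` is a sum of edge terms,
which will turn out to be nonnegative. At a common zero the quotient `f ^ 2 / g` is
`0` by the convention on division, which is the correct value here. -/
lemma hill_identity {n : ℕ} {f g d P : ℕ → ℝ} (hf : ∀ i, f (i + n) = -f i)
    (hg : ∀ i, g (i + n) = -g i) (hd : ∀ i, d (i + n) = d i)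
    (hill : ∀ i, (g (i + 2) - g (i + 1)) / d (i + 1) - (g (i + 1) - g i) / d i
      = -P i * g (i + 1))
    (h0 : ∀ i, g i = 0 → f i = 0) :
    ∑ i ∈ Finset.range n, ((f (i + 1) - f i) ^ 2 / d i - P i * f (i + 1) ^ 2)
      = ∑ i ∈ Finset.range n, ((f (i + 1) - f i) ^ 2
        - (f (i + 1) ^ 2 / g (i + 1) - f i ^ 2 / g i) * (g (i + 1) - g i)) / d i := by
  have key : ∀ i, P i * f (i + 1) ^ 2 = -(f (i + 1) ^ 2 / g (i + 1)) *
      ((g (i + 2) - g (i + 1)) / d (i + 1) - (g (i + 1) - g i) / d i) := by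
    intro i
    rw [hill]
    by_cases h : g (i + 1) = 0
    · simp [h, h0 _ h]
    · field_simp
  have shift := sum_range_shift (n := n)
    (F := fun i => f i ^ 2 / g i * ((g (i + 1) - g i) / d i)) (by
      intro i
      have : i + n + 1 = (i + 1) + n := by ring
      simp only [this, hf, hg, hd]
      rw [neg_sq, div_neg]
      ring) 1
  have e : ∀ i, (f (i + 1) - f i) ^ 2 / d i - P i * f (i + 1) ^ 2
      = ((f (i + 1) - f i) ^ 2
        - (f (i + 1) ^ 2 / g (i + 1) - f i ^ 2 / g i) * (g (i + 1) - g i)) / d i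
        + (f (1 + i) ^ 2 / g (1 + i) * ((g (1 + i + 1) - g (1 + i)) / d (1 + i))
          - f i ^ 2 / g i * ((g (i + 1) - g i) / d i)) := by
    intro i
    rw [key, show 1 + i = i + 1 by ring]
    ring
  rw [Finset.sum_congr rfl (fun i _ => e i), Finset.sum_add_distrib, Finset.sum_sub_distrib, shift]
  ring

lemma edge_eq {a b s t : ℝ} (hs : 0 < s) (ht : 0 < t) :
    (b - a) ^ 2 - (b ^ 2 / t - a ^ 2 / s) * (t - s) = s * t * (b / t - a / s) ^ 2 := by
  field_simp
  ring

/-- An edge term dominates the squared increment of the logarithm of `g / f`. -/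
lemma edge_log {a b s t : ℝ} (ha : 0 < a) (hb : 0 < b) (hs : 0 < s) (ht : 0 < t) :
    a * b * (Real.log (t / b) - Real.log (s / a)) ^ 2 ≤
      (b - a) ^ 2 - (b ^ 2 / t - a ^ 2 / s) * (t - s) := by
  set r := (Real.log (t / b) - Real.log (s / a)) with hr
  have h1 : Real.exp r = t * a / (b * s) := by
    rw [hr, Real.exp_sub, Real.exp_log (by positivity), Real.exp_log (by positivity)]
    field_simp
  have h2 : (b - a) ^ 2 - (b ^ 2 / t - a ^ 2 / s) * (t - s)
      = a * b * (Real.exp r + Real.exp (-r) - 2) := by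
    rw [Real.exp_neg, h1]
    field_simp
    ring
  rw [h2]
  have h3 : Real.exp r + Real.exp (-r) = 2 * Real.cosh r := by rw [Real.cosh_eq]; ring
  have h4 : 1 + r ^ 2 / 2 ≤ Real.cosh r := by
    have := Real.cosh_sq' (r / 2)
    have h5 := Real.cosh_two_mul (r / 2)
    have h6 : (r / 2) ^ 2 ≤ Real.sinh (r / 2) ^ 2 := by
      rw [sq_le_sq]
      rcases le_total 0 (r / 2) with h | h
      · have := Real.self_le_sinh_iff.2 h
        rw [abs_of_nonneg h, abs_of_nonneg (h.trans this)]; exact this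
      · have := Real.sinh_le_self_iff.2 h
        rw [abs_of_nonpos h, abs_of_nonpos (this.trans h)]; linarith
    rw [show 2 * (r / 2) = r by ring] at h5
    nlinarith
  rw [h3]
  exact mul_le_mul_of_nonneg_left (by linarith) (by positivity)

/-! ### The test function `sin φ` -/

/-- The edge terms of `hill_identity`, for test function `f` and solution `g`. -/
def edgeTerm (f g : ℕ → ℝ) (i : ℕ) : ℝ :=
  (f (i + 1) - f i) ^ 2 - (f (i + 1) ^ 2 / g (i + 1) - f i ^ 2 / g i) * (g (i + 1) - g i)

/-- A bound on the total edge energy of `sin φ` controls the oscillation of `log (g / sin φ)`: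
this is the Cauchy–Schwarz inequality combined with `∫ 1 / sin ^ 2 = -cot`. -/
lemma log_oscillation {n : ℕ} {φ g d : ℕ → ℝ} {S E : ℝ} (hS : 0 < S)
    (hd : ∀ i, 0 < d i) (hφ : ∀ i, φ (i + 1) = φ i + π / S * d i)
    (mesh : ∀ i, π / S * d i ≤ 1)
    (pos : ∀ i, 1 ≤ i → i < n → 0 < sin (φ i) ∧ 0 < g i)
    (hW : ∀ i, i < n → 0 ≤ edgeTerm (fun k => sin (φ k)) g i)
    (hE : ∑ i ∈ Finset.range n, edgeTerm (fun k => sin (φ k)) g i / d i ≤ E)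
    {i j : ℕ} (hi : 1 ≤ i) (hij : i ≤ j) (hj : j < n) :
    (log (g j / sin (φ j)) - log (g i / sin (φ i))) ^ 2 ≤
      E * (S / π * 2 * (cos (φ i) / sin (φ i) - cos (φ j) / sin (φ j))) := by
  have hpi := Real.pi_pos
  have tel1 : ∀ F : ℕ → ℝ, ∑ k ∈ Finset.Ico i j, (F (k + 1) - F k) = F j - F i :=
    fun F => Finset.sum_Ico_sub F hij
  have mem : ∀ k ∈ Finset.Ico i j, 0 < sin (φ k) ∧ 0 < g k ∧ 0 < sin (φ (k + 1)) ∧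
      0 < g (k + 1) := by
    intro k hk
    rw [Finset.mem_Ico] at hk
    obtain ⟨a, b⟩ := pos k (by omega) (by omega)
    obtain ⟨a', b'⟩ := pos (k + 1) (by omega) (by omega)
    exact ⟨a, b, a', b'⟩
  have cs := Finset.sum_sq_le_sum_mul_sum_of_sq_le_mul (Finset.Ico i j)
    (r := fun k => log (g (k + 1) / sin (φ (k + 1))) - log (g k / sin (φ k)))
    (f := fun k => edgeTerm (fun k => sin (φ k)) g k / d k)
    (g := fun k => d k / (sin (φ k) * sin (φ (k + 1))))
    (by
      intro k hk
      have hk' := Finset.mem_Ico.1 hk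
      exact div_nonneg (hW k (by omega)) (hd k).le)
    (by
      intro k hk
      obtain ⟨a, -, a', -⟩ := mem k hk
      have := hd k
      positivity)
    (by
      intro k hk
      obtain ⟨a, b, a', b'⟩ := mem k hk
      have h := edge_log a a' b b'
      have hdk := hd k
      have : edgeTerm (fun k => sin (φ k)) g k / d k * (d k / (sin (φ k) * sin (φ (k + 1))))
          = edgeTerm (fun k => sin (φ k)) g k / (sin (φ k) * sin (φ (k + 1))) := by
        field_simp
      rw [this, le_div_iff₀ (by positivity)]
      unfold edgeTerm
      linarith)
  rw [tel1 (fun k => log (g k / sin (φ k)))] at cs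
  refine cs.trans ?_
  have b1 : ∑ k ∈ Finset.Ico i j, edgeTerm (fun k => sin (φ k)) g k / d k ≤ E := by
    refine le_trans (Finset.sum_le_sum_of_subset_of_nonneg ?_ ?_) hE
    · intro k hk
      have := Finset.mem_Ico.1 hk
      exact Finset.mem_range.2 (by omega)
    · intro k hk _
      exact div_nonneg (hW k (Finset.mem_range.1 hk)) (hd k).le
  have b2 : ∑ k ∈ Finset.Ico i j, d k / (sin (φ k) * sin (φ (k + 1))) ≤
      S / π * 2 * (cos (φ i) / sin (φ i) - cos (φ j) / sin (φ j)) := by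
    have := tel1 (fun k => -(cos (φ k) / sin (φ k)))
    rw [show cos (φ i) / sin (φ i) - cos (φ j) / sin (φ j)
      = -(cos (φ j) / sin (φ j)) - -(cos (φ i) / sin (φ i)) by ring, ← this, Finset.mul_sum]
    refine Finset.sum_le_sum fun k hk => ?_
    obtain ⟨a, b, a', b'⟩ := mem k hk
    have e : -(cos (φ (k + 1)) / sin (φ (k + 1))) - -(cos (φ k) / sin (φ k))
        = sin (φ (k + 1) - φ k) / (sin (φ k) * sin (φ (k + 1))) := by
      rw [sin_sub]
      field_simp
      ring
    rw [e, ← mul_div_assoc]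
    refine div_le_div_of_nonneg_right ?_ (by positivity)
    have hD : φ (k + 1) - φ k = π / S * d k := by rw [hφ]; ring
    have hDp : 0 < π / S * d k := by have := hd k; positivity
    have hDm := mesh k
    rw [hD]
    -- `D ≤ 2 sin D` for `0 ≤ D ≤ 1`
    have hs : π / S * d k ≤ 2 * sin (π / S * d k) := by
      have := Real.sin_gt_sub_cube hDp
      have h3 : (π / S * d k) ^ 3 ≤ π / S * d k :=
        pow_le_of_le_one hDp.le hDm (by norm_num)
      linarith
    calc d k = S / π * (π / S * d k) := by field_simp
      _ ≤ S / π * (2 * sin (π / S * d k)) :=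
        mul_le_mul_of_nonneg_left hs (by positivity)
      _ = _ := by ring
  have hE0 : 0 ≤ E := le_trans (Finset.sum_nonneg fun k hk =>
    div_nonneg (hW k (Finset.mem_range.1 hk)) (hd k).le) hE
  have b3 : 0 ≤ ∑ k ∈ Finset.Ico i j, d k / (sin (φ k) * sin (φ (k + 1))) := by
    refine Finset.sum_nonneg fun k hk => ?_
    obtain ⟨a, -, a', -⟩ := mem k hk
    have := hd k
    positivity
  exact mul_le_mul b1 b2 b3 hE0

/-- A discrete intermediate value theorem. -/
lemma exists_bracket {φ : ℕ → ℝ} {ψ : ℝ} {N : ℕ} (h0 : φ 0 ≤ ψ) (hN : ψ < φ N) :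
    ∃ j < N, φ j ≤ ψ ∧ ψ < φ (j + 1) := by
  classical
  have hex : ∃ k, ψ < φ k := ⟨N, hN⟩
  have h1 := Nat.find_spec hex
  have h2 : Nat.find hex ≤ N := Nat.find_min' hex hN
  have h3 : Nat.find hex ≠ 0 := by
    intro h
    rw [h] at h1
    linarith
  obtain ⟨j, hj⟩ := Nat.exists_eq_succ_of_ne_zero h3
  refine ⟨j, by omega, ?_, ?_⟩
  · have := Nat.find_min hex (m := j) (by omega)
    exact not_lt.1 this
  · rw [← Nat.succ_eq_add_one, ← hj]; exact h1

/-- Small energy forces the solution `g` to be a multiple of `sin φ`, up to an error of the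
order of the square root of the energy, wherever `sin φ` is not too small. -/
lemma close_to_sin {n : ℕ} {φ g d : ℕ → ℝ} {S E ε : ℝ} (hS : 0 < S)
    (hε : 0 < ε) (hε' : ε < 1 / 10000000)
    (hd : ∀ i, 0 < d i) (hφ : ∀ i, φ (i + 1) = φ i + π / S * d i)
    (mesh : ∀ i, π / S * d i ≤ 1)
    (h0 : φ 0 ≤ 0) (hn : π / 2 < φ n)
    (pos : ∀ i, 1 ≤ i → i < n → 0 < sin (φ i) ∧ 0 < g i)
    (hW : ∀ i, i < n → 0 ≤ edgeTerm (fun k => sin (φ k)) g i)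
    (hE : ∑ i ∈ Finset.range n, edgeTerm (fun k => sin (φ k)) g i / d i ≤ E)
    (hEε : S * E ≤ 90 * ε ^ 3) :
    ∃ c : ℝ, ∀ j, 1 ≤ j → j < n → ε / 100 ≤ sin (φ j) →
      |c * g j - sin (φ j)| ≤ ε / 40 := by
  have hpi := Real.pi_gt_three
  obtain ⟨m, hmn, hm1, hm2⟩ := exists_bracket (ψ := π / 2) (by linarith) hn
  have hstep := hφ m
  have hmesh := mesh m
  have hm : 1 ≤ m := by
    by_contra hcon
    have : m = 0 := by omega
    subst this
    linarith
  have hsm : 1 / 2 ≤ sin (φ m) := by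
    rw [← Real.cos_pi_div_two_sub]
    refine le_trans ?_ Real.one_sub_sq_div_two_le_cos
    have : (π / 2 - φ m) ^ 2 ≤ 1 := pow_le_one₀ (by linarith) (by linarith)
    linarith
  have hgm := (pos m hm hmn).2
  refine ⟨sin (φ m) / g m, fun j hj hjn hs => ?_⟩
  obtain ⟨hsj, hgj⟩ := pos j hj hjn
  have hsj1 := Real.sin_le_one (φ j)
  set L := log (g j / sin (φ j)) - log (g m / sin (φ m)) with hL
  have cotb : ∀ x : ℝ, 0 < sin x → |cos x / sin x| ≤ 1 / sin x := by
    intro x hx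
    rw [abs_div, abs_of_pos hx]
    exact div_le_div_of_nonneg_right (Real.abs_cos_le_one x) hx.le
  have c1 := abs_le.1 (cotb _ hsj)
  have c2 := abs_le.1 (cotb (φ m) (by linarith))
  have c3 : 1 / sin (φ m) ≤ 2 / sin (φ j) := by
    rw [div_le_div_iff₀ (by linarith) hsj]; linarith
  have c4 : 1 / sin (φ j) + 2 / sin (φ j) = 3 / sin (φ j) := by ring
  have hE0 : 0 ≤ E := le_trans (Finset.sum_nonneg fun k hk =>
    div_nonneg (hW k (Finset.mem_range.1 hk)) (hd k).le) hE
  have hLb : L ^ 2 ≤ E * (S / π * 2 * (3 / sin (φ j))) := by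
    rcases le_total m j with h | h
    · refine (log_oscillation hS hd hφ mesh pos hW hE hm h hjn).trans ?_
      gcongr
      linarith [c1.1, c2.2]
    · have := log_oscillation hS hd hφ mesh pos hW hE hj h hmn
      rw [hL, ← neg_sq, neg_sub]
      refine this.trans ?_
      gcongr
      linarith [c1.2, c2.1]
  have hLb2 : L ^ 2 * sin (φ j) ≤ 180 * ε ^ 3 := by
    have e1 : E * (S / π * 2 * (3 / sin (φ j))) * sin (φ j) = 6 * (S * E) / π := by
      field_simp
      ring
    have e2 : 6 * (S * E) / π ≤ 180 * ε ^ 3 := by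
      rw [div_le_iff₀ (by linarith)]
      have : 0 < ε ^ 3 := by positivity
      have := mul_lt_mul_of_pos_left hpi this
      linarith
    calc _ ≤ E * (S / π * 2 * (3 / sin (φ j))) * sin (φ j) :=
          mul_le_mul_of_nonneg_right hLb hsj.le
      _ ≤ _ := by rw [e1]; exact e2
  have hL1 : |L| ≤ 1 := by
    rw [← sq_le_one_iff_abs_le_one]
    have h1 : L ^ 2 * (ε / 100) ≤ 180 * ε ^ 3 :=
      (mul_le_mul_of_nonneg_left hs (sq_nonneg L)).trans hLb2
    have h2 : L ^ 2 ≤ 18000 * ε ^ 2 := by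
      have : ε * L ^ 2 ≤ ε * (18000 * ε ^ 2) := by linarith
      exact le_of_mul_le_mul_left this hε
    have h3 : ε ^ 2 ≤ (1 / 10000000) ^ 2 := pow_le_pow_left₀ hε.le hε'.le 2
    norm_num at h3
    linarith
  have hexp := Real.abs_exp_sub_one_le hL1
  have hexpL : Real.exp L = (g j / sin (φ j)) / (g m / sin (φ m)) := by
    have : 0 < sin (φ m) := by linarith
    rw [hL, Real.exp_sub, Real.exp_log (by positivity), Real.exp_log (by positivity)]
  have heq : sin (φ m) / g m * g j - sin (φ j) = sin (φ j) * (Real.exp L - 1) := by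
    have : 0 < sin (φ m) := by linarith
    rw [hexpL]
    field_simp
  rw [heq]
  apply abs_le_of_sq_le_sq _ (by positivity)
  have hsq : (Real.exp L - 1) ^ 2 ≤ 4 * L ^ 2 := by
    have := pow_le_pow_left₀ (abs_nonneg _) hexp 2
    rw [mul_pow, sq_abs, sq_abs] at this
    linarith
  have h5 : sin (φ j) ^ 2 * (Real.exp L - 1) ^ 2 ≤ sin (φ j) ^ 2 * (4 * L ^ 2) :=
    mul_le_mul_of_nonneg_left hsq (sq_nonneg _)
  have h6 : sin (φ j) * (L ^ 2 * sin (φ j)) ≤ 1 * (180 * ε ^ 3) :=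
    mul_le_mul hsj1 hLb2 (by positivity) (by norm_num)
  have h7 : ε ^ 3 ≤ 1 / 10000000 * ε ^ 2 := by
    rw [pow_succ']
    exact mul_le_mul_of_nonneg_right hε'.le (sq_nonneg _)
  have h8 := sq_nonneg ε
  rw [mul_pow, div_pow]
  linarith

/-! ### Centrally symmetric polygons -/

/-- The planar cross product (determinant of two vectors). -/
def cr (a b : E2) : ℝ := a 0 * b 1 - a 1 * b 0

lemma cr_neg_right (a b : E2) : cr a (-b) = -cr a b := by simp [cr]; ring
lemma cr_neg_left (a b : E2) : cr (-a) b = -cr a b := by simp [cr]; ring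
lemma cr_self (a : E2) : cr a a = 0 := by simp [cr]; ring
lemma cr_smul_left (c : ℝ) (a b : E2) : cr (c • a) b = c * cr a b := by simp [cr]; ring

/-- Twice the area of the triangle spanned by the `i`-th edge of the polygon and the origin. -/
def dd (x : ℕ → E2) (i : ℕ) : ℝ := cr (x i) (x (i + 1))

/-- Twice the area of the triangle spanned by the origin and the edge of the polar polygon dual
to the vertex `x (i + 1)`; it is the potential of the discrete Hill equation satisfied by `x`. -/
def pp (x : ℕ → E2) (i : ℕ) : ℝ :=
  (dd x i + dd x (i + 1) - cr (x i) (x (i + 2))) / (dd x i * dd x (i + 1))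

/-- The periodic vertex sequence of an `o`-symmetric `2 n`-gon, star-shaped about the origin and
listed counterclockwise. Convexity is not part of the definition. -/
structure SymPoly (n : ℕ) (x : ℕ → E2) : Prop where
  anti : ∀ i, x (i + n) = -x i
  pos : ∀ i j, i < j → j < i + n → 0 < cr (x i) (x j)
  three : 3 ≤ n

namespace SymPoly

variable {n : ℕ} {x : ℕ → E2}

lemma dd_pos (h : SymPoly n x) (i : ℕ) : 0 < dd x i :=
  h.pos _ _ (by omega) (by have := h.three; omega)

lemma dd_per (h : SymPoly n x) (i : ℕ) : dd x (i + n) = dd x i := by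
  unfold dd
  rw [show i + n + 1 = (i + 1) + n by ring, h.anti, h.anti, cr_neg_left, cr_neg_right, neg_neg]

lemma pp_per (h : SymPoly n x) (i : ℕ) : pp x (i + n) = pp x i := by
  unfold pp
  rw [show i + n + 1 = (i + 1) + n by ring, show i + n + 2 = (i + 2) + n by ring,
    h.dd_per, h.dd_per, h.anti, h.anti, cr_neg_left, cr_neg_right, neg_neg]

lemma shift (h : SymPoly n x) (m : ℕ) : SymPoly n (fun i => x (m + i)) where
  anti i := by rw [← h.anti]; congr 1; ring
  pos i j hij hj := h.pos _ _ (by omega) (by omega)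
  three := h.three

lemma hill (h : SymPoly n x) (z : E2) (i : ℕ) :
    (cr z (x (i + 2)) - cr z (x (i + 1))) / dd x (i + 1)
      - (cr z (x (i + 1)) - cr z (x i)) / dd x i = -pp x i * cr z (x (i + 1)) := by
  have h1 := (h.dd_pos i).ne'
  have h2 := (h.dd_pos (i + 1)).ne'
  unfold pp
  field_simp
  simp only [dd, cr, show i + 1 + 1 = i + 2 by ring]
  ring

end SymPoly

/-- The value at `f` of the quadratic form of the discrete Hill operator of the polygon `x`. -/
def energy (n : ℕ) (x : ℕ → E2) (f : ℕ → ℝ) : ℝ :=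
  ∑ i ∈ Finset.range n, ((f (i + 1) - f i) ^ 2 / dd x i - pp x i * f (i + 1) ^ 2)

/-- Nonnegativity of the quadratic form at `sin φ`, with stability, when the zero of `sin φ` lies
between the first two vertices. The comparison solution `g` is the one which
agrees with `sin φ` on the edge containing this zero, so that this edge contributes nothing. -/
lemma energy_sin_base {n : ℕ} {x : ℕ → E2} (h : SymPoly n x) {φ : ℕ → ℝ} {S ε : ℝ} (hS : 0 < S)
    (hε : 0 < ε) (hε' : ε < 1 / 10000000)
    (hφ : ∀ i, φ (i + 1) = φ i + π / S * dd x i) (hφn : ∀ i, φ (i + n) = φ i + π)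
    (mesh : ∀ i, π / S * dd x i ≤ 1) (h0 : φ 0 ≤ 0) (h1 : 0 < φ 1) :
    0 ≤ energy n x (fun i => sin (φ i)) ∧
    (S * energy n x (fun i => sin (φ i)) ≤ 90 * ε ^ 3 →
      ∃ z : E2, ∀ j, 1 ≤ j → j < n → ε / 100 ≤ sin (φ j) →
        |cr z (x j) - sin (φ j)| ≤ ε / 40) := by
  have hpi := Real.pi_gt_three
  have hn3 := h.three
  have hd := h.dd_pos
  have mono : StrictMono φ := strictMono_nat_of_lt_succ fun i => by
    rw [hφ]
    have := hd i
    have : 0 < π / S * dd x i := by positivity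
    linarith
  have hφ01 : φ 1 ≤ φ 0 + 1 := by have := hφ 0; have := mesh 0; simp only [zero_add] at *; linarith
  have hφnn := hφn 0
  rw [zero_add] at hφnn
  have hs0 : sin (φ 0) ≤ 0 := Real.sin_nonpos_of_nonpos_of_neg_pi_le h0 (by linarith)
  have hspos : ∀ i, 1 ≤ i → i < n → 0 < sin (φ i) := fun i hi hin =>
    Real.sin_pos_of_pos_of_lt_pi (h1.trans_le (mono.monotone hi)) (by
      have := mono hin; linarith)
  have hs1 := hspos 1 le_rfl (by omega)
  obtain ⟨z, hz⟩ : ∃ z : E2, z = (1 / dd x 0) • (sin (φ 1) • x 0 - sin (φ 0) • x 1) := ⟨_, rfl⟩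
  obtain ⟨g, hg⟩ : ∃ g : ℕ → ℝ, g = fun i => cr z (x i) := ⟨_, rfl⟩
  have hgform : ∀ i, g i = (sin (φ 1) * cr (x 0) (x i) - sin (φ 0) * cr (x 1) (x i)) / dd x 0 := by
    intro i
    simp only [hg, hz, cr_smul_left]
    simp only [cr, PiLp.sub_apply, PiLp.smul_apply, smul_eq_mul]
    ring
  have hd0 := hd 0
  have hg0 : g 0 = sin (φ 0) := by
    rw [hgform, cr_self, div_eq_iff hd0.ne']
    simp only [dd, cr]
    ring
  have hg1 : g 1 = sin (φ 1) := by
    rw [hgform, cr_self, div_eq_iff hd0.ne']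
    simp only [dd, zero_add]
    ring
  have hgpos : ∀ i, 1 ≤ i → i < n → 0 < g i := by
    intro i hi hin
    rw [hgform]
    have a1 := h.pos 0 i (by omega) (by omega)
    have a2 : 0 ≤ cr (x 1) (x i) := by
      rcases hi.eq_or_lt with rfl | hi'
      · rw [cr_self]
      · exact (h.pos 1 i hi' (by omega)).le
    refine div_pos ?_ hd0
    have := mul_pos hs1 a1
    have := mul_nonneg (neg_nonneg.2 hs0) a2
    linarith
  have hfanti : ∀ i, sin (φ (i + n)) = -sin (φ i) := fun i => by rw [hφn, Real.sin_add_pi]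
  have hganti : ∀ i, g (i + n) = -g i := fun i => by
    simp only [hg, h.anti, cr_neg_right]
  have hzero : ∀ i, g i = 0 → sin (φ i) = 0 := by
    intro i
    induction i using Nat.strong_induction_on with
    | _ i ih =>
      intro hi
      rcases lt_or_ge i n with hin | hin
      · rcases Nat.eq_zero_or_pos i with rfl | hi0
        · rw [← hg0, hi]
        · exact absurd hi (hgpos i hi0 hin).ne'
      · obtain ⟨k, rfl⟩ := Nat.exists_eq_add_of_le' hin
        rw [hganti, neg_eq_zero] at hi
        rw [hfanti, ih k (by omega) hi, neg_zero]
  have hgn : g n = -sin (φ 0) := by have := hganti 0; rwa [zero_add, hg0] at this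
  have hfn : sin (φ n) = -sin (φ 0) := by have := hfanti 0; rwa [zero_add] at this
  have hW : ∀ i, i < n → 0 ≤ edgeTerm (fun k => sin (φ k)) g i := by
    intro i hi
    unfold edgeTerm
    dsimp only
    rcases Nat.eq_zero_or_pos i with rfl | hi0
    · rw [zero_add, hg0, hg1]
      have : ∀ a : ℝ, a ^ 2 / a = a := fun a => by rw [sq, mul_self_div_self]
      rw [this, this]
      exact le_of_eq (by ring)
    · have hgi := hgpos i hi0 hi
      rcases (Nat.succ_le_of_lt hi).eq_or_lt with hin | hin
      · rw [Nat.succ_eq_add_one] at hin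
        rw [hin, hgn, hfn]
        rcases hs0.eq_or_lt with h00 | h00
        · rw [h00]
          have : sin (φ i) ^ 2 / g i * g i = sin (φ i) ^ 2 := div_mul_cancel₀ _ hgi.ne'
          simp only [neg_zero, div_zero, zero_sub]
          linarith
        · rw [edge_eq hgi (neg_pos.2 h00)]
          have := neg_pos.2 h00
          positivity
      · have := hgpos (i + 1) (by omega) hin
        rw [edge_eq hgi this]
        positivity
  have hid : energy n x (fun i => sin (φ i)) =
      ∑ i ∈ Finset.range n, edgeTerm (fun k => sin (φ k)) g i / dd x i :=
    hill_identity (f := fun i => sin (φ i)) (g := g) (d := dd x) (P := pp x) hfanti hganti h.dd_per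
      (by rw [hg]; exact h.hill z) hzero
  refine ⟨?_, fun hE => ?_⟩
  · rw [hid]
    exact Finset.sum_nonneg fun k hk => div_nonneg (hW k (Finset.mem_range.1 hk)) (hd k).le
  · obtain ⟨c, hc⟩ := close_to_sin hS hε hε' hd hφ mesh h0 (by linarith)
      (fun i hi hin => ⟨hspos i hi hin, hgpos i hi hin⟩) hW hid.ge hE
    refine ⟨c • z, fun j hj hjn hs => ?_⟩
    rw [cr_smul_left]
    have := hc j hj hjn hs
    rwa [hg] at this

/-- The same as `energy_sin_base` for an arbitrary phase `α`. -/
lemma energy_sin {n : ℕ} {x : ℕ → E2} (h : SymPoly n x) {φ : ℕ → ℝ} {S ε : ℝ} (hS : 0 < S)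
    (hε : 0 < ε) (hε' : ε < 1 / 10000000)
    (hφ : ∀ i, φ (i + 1) = φ i + π / S * dd x i) (hφn : ∀ i, φ (i + n) = φ i + π)
    (mesh : ∀ i, π / S * dd x i < ε / 100) (h0 : φ 0 = 0) {α : ℝ} (hα : 0 ≤ α) (hα' : α < π) :
    0 ≤ energy n x (fun i => sin (φ i - α)) ∧
    (S * energy n x (fun i => sin (φ i - α)) ≤ 90 * ε ^ 3 →
      ∃ z : E2, ∀ j < n, ε / 100 ≤ |sin (φ j - α)| →
        |cr z (x j) - sin (φ j - α)| ≤ ε / 40) := by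
  have hφnn := hφn 0
  rw [zero_add, h0, zero_add] at hφnn
  obtain ⟨m, hmn, hm1, hm2⟩ := exists_bracket (φ := φ) (ψ := α) (N := n) (by linarith) (by linarith)
  have key := energy_sin_base (h.shift m) (φ := fun i => φ (m + i) - α) hS hε hε'
    (fun i => by
      have := hφ (m + i)
      simp only [dd] at *
      rw [← add_assoc, this]; ring)
    (fun i => by rw [← add_assoc, hφn]; ring)
    (fun i => by
      have := mesh (m + i)
      simp only [dd] at *
      rw [← add_assoc]; linarith)
    (by simpa using hm1) (by simpa using hm2)
  have hen : energy n (fun i => x (m + i)) (fun i => sin (φ (m + i) - α))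
      = energy n x (fun i => sin (φ i - α)) := by
    unfold energy
    rw [← sum_range_shift (F := fun i => (sin (φ (i + 1) - α) - sin (φ i - α)) ^ 2 / dd x i
      - pp x i * sin (φ (i + 1) - α) ^ 2) _ m]
    · rfl
    · intro i
      have e : ∀ k, sin (φ (k + n) - α) = -sin (φ k - α) := fun k => by
        rw [hφn, add_sub_right_comm, Real.sin_add_pi]
      rw [show i + n + 1 = (i + 1) + n by ring, e, e, h.dd_per, h.pp_per]
      ring
  rw [hen] at key
  refine ⟨key.1, fun hE => ?_⟩
  obtain ⟨z, hz⟩ := key.2 hE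
  refine ⟨z, fun j hj hs => ?_⟩
  have mono : StrictMono φ := strictMono_nat_of_lt_succ fun i => by
    rw [hφ]
    have := h.dd_pos i
    have : 0 < π / S * dd x i := by positivity
    linarith
  rcases lt_trichotomy j m with hjm | hjm | hjm
  · -- the antipodal vertex `x (j + n)` lies in the arc where the sine is positive
    have h1 := mono hjm
    have h2 := mono.monotone (Nat.zero_le j)
    have hneg : sin (φ j - α) ≤ 0 :=
      Real.sin_nonpos_of_nonpos_of_neg_pi_le (by linarith) (by linarith)
    rw [abs_of_nonpos hneg] at hs
    have hh := hz (j + n - m) (by omega) (by omega)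
    rw [show m + (j + n - m) = j + n by omega, hφn, h.anti, cr_neg_right,
      add_sub_right_comm, Real.sin_add_pi] at hh
    have := hh hs
    rw [show -cr z (x j) - -sin (φ j - α) = -(cr z (x j) - sin (φ j - α)) by ring, abs_neg] at this
    exact this
  · -- at the vertex next to the zero the sine is smaller than the mesh
    exfalso
    subst hjm
    have h1 := hφ j
    have h2 := mesh j
    have h3 := Real.abs_sin_le_abs (x := φ j - α)
    rw [abs_of_nonpos (by linarith : φ j - α ≤ 0)] at h3
    linarith
  · have h1 := mono.monotone (Nat.succ_le_of_lt hjm)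
    have h2 := mono hj
    have hpos : 0 ≤ sin (φ j - α) :=
      Real.sin_nonneg_of_nonneg_of_le_pi (by rw [Nat.succ_eq_add_one] at h1; linarith)
        (by linarith)
    rw [abs_of_nonneg hpos] at hs
    have hh := hz (j - m) (by omega) (by omega)
    rw [show m + (j - m) = j by omega] at hh
    exact hh hs

/-! ### Stability for polygons -/

lemma exists_polar (z : E2) : ∃ θ : ℝ, 0 ≤ θ ∧ θ < 2 * π ∧ z 0 = ‖z‖ * cos θ ∧ z 1 = ‖z‖ * sin θ := by
  have hpi := Real.pi_pos
  by_cases hz : z = 0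
  · exact ⟨0, le_rfl, by positivity, by simp [hz], by simp [hz]⟩
  set w : ℂ := ⟨z 0, z 1⟩ with hw
  have hnorm : ‖w‖ = ‖z‖ := by
    rw [EuclideanSpace.norm_eq, Complex.norm_eq_sqrt_sq_add_sq, Fin.sum_univ_two]
    simp [hw]
  have hz' : ‖z‖ ≠ 0 := by simpa using hz
  have hw0 : w ≠ 0 := by
    rw [← norm_ne_zero_iff, hnorm]; exact hz'
  have h1 : z 0 = ‖z‖ * cos w.arg := by
    rw [Complex.cos_arg hw0, hnorm, mul_div_cancel₀ _ hz']
  have h2 : z 1 = ‖z‖ * sin w.arg := by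
    rw [Complex.sin_arg, hnorm, mul_div_cancel₀ _ hz']
  have h3 := Complex.neg_pi_lt_arg w
  have h4 := Complex.arg_le_pi w
  rcases le_or_gt 0 w.arg with h | h
  · exact ⟨w.arg, h, by linarith, h1, h2⟩
  · exact ⟨w.arg + 2 * π, by linarith, by linarith, by rwa [Real.cos_add_two_pi],
      by rwa [Real.sin_add_two_pi]⟩

lemma norm_le_add_abs (v : E2) : ‖v‖ ≤ |v 0| + |v 1| := by
  rw [EuclideanSpace.norm_eq, Fin.sum_univ_two]
  apply Real.sqrt_le_iff.2
  refine ⟨by positivity, ?_⟩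
  simp only [Real.norm_eq_abs]
  nlinarith [abs_nonneg (v 0), abs_nonneg (v 1)]

/-- If the partial sums `φ` have mesh smaller than `ε / 100`, every angle is close to some `φ j`
at which neither the sine nor the cosine is too small. -/
lemma exists_good_index {n : ℕ} {φ : ℕ → ℝ} {ε ψ : ℝ} (hε : 0 < ε) (hε' : ε < 1 / 10000000)
    (mesh : ∀ i, φ (i + 1) < φ i + ε / 100) (h0 : φ 0 = 0) (hn : φ n = π)
    (hψ : 0 ≤ ψ) (hψ' : ψ < π) :
    ∃ j < n, |φ j - ψ| ≤ ε / 25 ∧ ε / 100 ≤ |sin (φ j)| ∧ ε / 100 ≤ |sin (φ j - π / 2)| := by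
  have hpi := Real.pi_gt_three
  have hpi4 := Real.pi_lt_four
  have small : ∀ y, ε / 50 ≤ y → y ≤ π / 2 → ε / 100 ≤ sin y := by
    intro y hy hy'
    refine le_trans ?_ (Real.mul_le_sin (by linarith) hy')
    have : 1 / 2 ≤ 2 / π := by rw [div_le_div_iff₀ (by norm_num) (by linarith)]; linarith
    calc ε / 100 ≤ 1 / 2 * y := by linarith
      _ ≤ 2 / π * y := mul_le_mul_of_nonneg_right this (by linarith)
  have small2 : ∀ y, ε / 50 ≤ y → y ≤ π / 2 - ε / 50 →
      ε / 100 ≤ |sin y| ∧ ε / 100 ≤ |sin (y - π / 2)| := by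
    intro y hy hy'
    refine ⟨(small y hy (by linarith)).trans (le_abs_self _), ?_⟩
    rw [← abs_neg, ← Real.sin_neg, neg_sub]
    exact (small _ (by linarith) (by linarith)).trans (le_abs_self _)
  rcases le_or_gt ψ (π / 2) with h | h
  · obtain ⟨t, ht1, ht2, ht3⟩ : ∃ t, 3 * (ε / 100) ≤ t ∧ t ≤ π / 2 - 3 * (ε / 100) ∧
        |t - ψ| ≤ 3 * (ε / 100) := by
      rcases le_total ψ (3 * (ε / 100)) with h1 | h1
      · exact ⟨3 * (ε / 100), le_rfl, by linarith, by rw [abs_le]; constructor <;> linarith⟩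
      rcases le_total ψ (π / 2 - 3 * (ε / 100)) with h2 | h2
      · exact ⟨ψ, h1, h2, by rw [sub_self, abs_zero]; positivity⟩
      · exact ⟨π / 2 - 3 * (ε / 100), by linarith, le_rfl, by rw [abs_le]; constructor <;> linarith⟩
    obtain ⟨j, hj, hj1, hj2⟩ := exists_bracket (φ := φ) (ψ := t) (N := n) (by linarith) (by linarith)
    have := mesh j
    rw [abs_le] at ht3
    refine ⟨j, hj, ?_, small2 _ (by linarith) (by linarith)⟩
    rw [abs_le]; constructor <;> linarith
  · obtain ⟨t, ht1, ht2, ht3⟩ : ∃ t, π / 2 + 3 * (ε / 100) ≤ t ∧ t ≤ π - 3 * (ε / 100) ∧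
        |t - ψ| ≤ 3 * (ε / 100) := by
      rcases le_total ψ (π / 2 + 3 * (ε / 100)) with h1 | h1
      · exact ⟨π / 2 + 3 * (ε / 100), le_rfl, by linarith, by rw [abs_le]; constructor <;> linarith⟩
      rcases le_total ψ (π - 3 * (ε / 100)) with h2 | h2
      · exact ⟨ψ, h1, h2, by rw [sub_self, abs_zero]; positivity⟩
      · exact ⟨π - 3 * (ε / 100), by linarith, le_rfl, by rw [abs_le]; constructor <;> linarith⟩
    obtain ⟨j, hj, hj1, hj2⟩ := exists_bracket (φ := φ) (ψ := t) (N := n) (by linarith) (by linarith)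
    have := mesh j
    rw [abs_le] at ht3
    obtain ⟨a, b⟩ := small2 (φ j - π / 2) (by linarith) (by linarith)
    refine ⟨j, hj, by rw [abs_le]; constructor <;> linarith, ?_, a⟩
    rwa [show φ j - π / 2 - π / 2 = φ j - π by ring, Real.sin_sub_pi, abs_neg] at b

/-- Stability of the Blaschke–Santaló inequality for polygons: if the area `S` of the
polygon and the area `∑ pp` of its polar have product close to `π ^ 2`, some linear map sends the
vertices close to a dense set of points of the unit circle. The two rows of this linear
map come from the test functions `sin φ` and `sin (φ - π / 2)`, where
`φ` is the area swept out along the polygon, normalized to total angle `2 π`. -/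
lemma polygon_stability {n : ℕ} {x : ℕ → E2} (h : SymPoly n x) {S ε : ℝ}
    (hSdef : S = ∑ i ∈ Finset.range n, dd x i)
    (hε : 0 < ε) (hε' : ε < 1 / 10000000)
    (mesh : ∀ i, π / S * dd x i < ε / 100)
    (hprod : π ^ 2 * (1 - 9 * ε ^ 3) ≤ S * ∑ i ∈ Finset.range n, pp x i) :
    ∃ z₀ z₁ : E2, ∀ u : E2, ‖u‖ = 1 → ∃ j, ‖!₂[cr z₀ (x j), cr z₁ (x j)] - u‖ ≤ ε / 4 := by
  have hpi := Real.pi_gt_three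
  have hn3 := h.three
  have hS : 0 < S := by
    rw [hSdef]
    exact Finset.sum_pos (fun i _ => h.dd_pos i) ⟨0, Finset.mem_range.2 (by omega)⟩
  obtain ⟨φ, hφd⟩ : ∃ φ : ℕ → ℝ, φ = fun i => π / S * ∑ k ∈ Finset.range i, dd x k := ⟨_, rfl⟩
  have hφ : ∀ i, φ (i + 1) = φ i + π / S * dd x i := fun i => by
    rw [hφd]; simp only [Finset.sum_range_succ]; ring
  have h0 : φ 0 = 0 := by rw [hφd]; simp
  have hn : φ n = π := by
    rw [hφd]; simp only [← hSdef]; field_simp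
  have hφn : ∀ i, φ (i + n) = φ i + π := by
    intro i
    induction i with
    | zero => rw [zero_add, hn, h0, zero_add]
    | succ i ih =>
      rw [show i + 1 + n = i + n + 1 by ring, hφ, hφ, ih, h.dd_per]; ring
  obtain ⟨e0, s0⟩ := energy_sin h hS hε hε' hφ hφn mesh h0 le_rfl Real.pi_pos
  obtain ⟨e1, s1⟩ := energy_sin h hS hε hε' hφ hφn mesh h0 (α := π / 2) (by linarith) (by linarith)
  have hsum : energy n x (fun i => sin (φ i - 0)) + energy n x (fun i => sin (φ i - π / 2))
      ≤ π ^ 2 / S - ∑ i ∈ Finset.range n, pp x i := by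
    have hle : ∑ i ∈ Finset.range n, (π / S) ^ 2 * dd x i = π ^ 2 / S := by
      rw [← Finset.mul_sum, ← hSdef]; field_simp
    rw [← hle]
    unfold energy
    rw [← Finset.sum_add_distrib, ← Finset.sum_sub_distrib]
    refine Finset.sum_le_sum fun i _ => ?_
    have hdi := h.dd_pos i
    simp only [sub_zero, Real.sin_sub_pi_div_two]
    have hc : 1 - (π / S * dd x i) ^ 2 / 2 ≤ cos (φ (i + 1) - φ i) := by
      rw [hφ, add_sub_cancel_left]; exact Real.one_sub_sq_div_two_le_cos
    rw [Real.cos_sub] at hc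
    have q1 := Real.sin_sq_add_cos_sq (φ (i + 1))
    have q2 := Real.sin_sq_add_cos_sq (φ i)
    have hb : (sin (φ (i + 1)) - sin (φ i)) ^ 2 + (-cos (φ (i + 1)) - -cos (φ i)) ^ 2
        ≤ (π / S * dd x i) ^ 2 := by nlinarith
    have hb2 : ((sin (φ (i + 1)) - sin (φ i)) ^ 2 + (-cos (φ (i + 1)) - -cos (φ i)) ^ 2) / dd x i
        ≤ (π / S) ^ 2 * dd x i := by
      rw [div_le_iff₀ hdi]; linarith
    have hp : pp x i * sin (φ (i + 1)) ^ 2 + pp x i * (-cos (φ (i + 1))) ^ 2 = pp x i := by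
      rw [neg_sq, ← mul_add, q1, mul_one]
    rw [add_div] at hb2
    linarith
  have hpi2 : π ^ 2 ≤ 10 := by
    have := Real.pi_lt_d2
    nlinarith
  have hSsum : S * energy n x (fun i => sin (φ i - 0)) + S * energy n x (fun i => sin (φ i - π / 2))
      ≤ 90 * ε ^ 3 := by
    have h1 := mul_le_mul_of_nonneg_left hsum hS.le
    rw [mul_sub, mul_div_cancel₀ _ hS.ne'] at h1
    have h2 : 0 < ε ^ 3 := by positivity
    have h3 := mul_le_mul_of_nonneg_right hpi2 h2.le
    linarith
  have m0 := mul_nonneg hS.le e0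
  have m1 := mul_nonneg hS.le e1
  obtain ⟨z₀, hz₀⟩ := s0 (by linarith)
  obtain ⟨z₁, hz₁⟩ := s1 (by linarith)
  have main : ∀ ψ, 0 ≤ ψ → ψ < π → ∃ j, |cr z₀ (x j) - sin ψ| ≤ ε / 8 ∧
      |cr z₁ (x j) - sin (ψ - π / 2)| ≤ ε / 8 := by
    intro ψ hψ hψ'
    obtain ⟨j, hj, a, b, c⟩ := exists_good_index hε hε'
      (fun i => by rw [hφ]; linarith [mesh i]) h0 hn hψ hψ'
    have t0 := hz₀ j hj (by rwa [sub_zero])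
    have t1 := hz₁ j hj c
    have r0 := (abs_sin_sub_sin_le (φ j) ψ).trans a
    have r1 := abs_sin_sub_sin_le (φ j - π / 2) (ψ - π / 2)
    rw [sub_sub_sub_cancel_right] at r1
    replace r1 := r1.trans a
    rw [sub_zero] at t0
    rw [abs_le] at t0 t1 r0 r1
    refine ⟨j, abs_le.2 ⟨?_, ?_⟩, abs_le.2 ⟨?_, ?_⟩⟩ <;>
      linarith [t0.1, t0.2, t1.1, t1.2, r0.1, r0.2, r1.1, r1.2]
  refine ⟨z₀, z₁, fun u hu => ?_⟩
  obtain ⟨ψ, hψ0, hψ1, c1, c2⟩ := exists_polar (!₂[-u 1, u 0])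
  have hun : ‖!₂[-u 1, u 0]‖ = ‖u‖ := by
    simp only [EuclideanSpace.norm_eq, Fin.sum_univ_two]
    simp [add_comm]
  rw [hun, hu, one_mul] at c1 c2
  simp at c1 c2
  rcases lt_or_ge ψ π with hlt | hge
  · obtain ⟨j, a, b⟩ := main ψ hψ0 hlt
    refine ⟨j, (norm_le_add_abs _).trans ?_⟩
    rw [Real.sin_sub_pi_div_two, ← c1, neg_neg] at b
    rw [← c2] at a
    simp
    linarith
  · obtain ⟨j, a, b⟩ := main (ψ - π) (by linarith) (by linarith)
    refine ⟨j + n, (norm_le_add_abs _).trans ?_⟩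
    rw [Real.sin_sub_pi_div_two, Real.cos_sub_pi, ← c1, neg_neg] at b
    rw [Real.sin_sub_pi, ← c2] at a
    rw [h.anti, cr_neg_right, cr_neg_right]
    rw [← abs_neg] at a b
    simp
    rw [show -cr z₀ (x j) - u 0 = -(cr z₀ (x j) - -u 0) by ring,
      show -cr z₁ (x j) - u 1 = -(cr z₁ (x j) - -u 1) by ring]
    linarith

/-! ### From approximate unit vectors to an ellipse -/

/-- If the images under `B` of `N`-unit vectors are `ε / 4`-dense near the Euclidean unit circle, the
unit ball `K` of `N` lies between two homothetic ellipses with ratio less than `1 + ε`: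
by the triangle inequality, `N ∘ B⁻¹` is within `ε / 4` times its maximum from `1` on
the unit circle. -/
lemma sandwich {N : Seminorm ℝ E2} {K : Set E2} (hK : ∀ x, x ∈ K ↔ N x ≤ 1)
    (hN : Continuous N) (B : E2 →ₗ[ℝ] E2) {ε : ℝ} (hε : 0 < ε) (hε1 : ε < 1)
    (hB : ∀ u : E2, ‖u‖ = 1 → ∃ x, N x = 1 ∧ ‖B x - u‖ ≤ ε / 4) :
    ∃ (T : E2 →ₗ[ℝ] E2) (lam : ℝ), Function.Bijective T ∧
          1 ≤ lam ∧ lam < 1 + ε ∧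
          ⇑T '' Metric.closedBall (0 : E2) 1 ⊆ K ∧
          K ⊆ (fun x => lam • T x) '' Metric.closedBall (0 : E2) 1 := by
  have hsurj : Function.Surjective B := by
    rw [← LinearMap.range_eq_top, ← Submodule.orthogonal_eq_bot_iff, Submodule.eq_bot_iff]
    by_contra! hcon
    obtain ⟨v, hv, hv0⟩ := hcon
    have hvn : ‖v‖ ≠ 0 := by simpa using hv0
    obtain ⟨x, -, hx⟩ := hB (‖v‖⁻¹ • v) (by rw [norm_smul, norm_inv, norm_norm, inv_mul_cancel₀ hvn])
    have h1 : inner ℝ (B x) (‖v‖⁻¹ • v) = 0 := by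
      rw [inner_smul_right, hv (B x) (LinearMap.mem_range_self B x), mul_zero]
    have h2 := norm_sub_sq_real (B x) (‖v‖⁻¹ • v)
    rw [h1, norm_smul ‖v‖⁻¹, norm_inv, norm_norm, inv_mul_cancel₀ hvn] at h2
    nlinarith [norm_nonneg (B x - ‖v‖⁻¹ • v), sq_nonneg ‖B x‖]
  have hinj : Function.Injective B := LinearMap.injective_iff_surjective.2 hsurj
  let e : E2 ≃ₗ[ℝ] E2 := LinearEquiv.ofBijective B ⟨hinj, hsurj⟩
  have heB : ∀ x, e x = B x := fun x => rfl
  let M : Seminorm ℝ E2 := N.comp e.symm.toLinearMap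
  have hMdef : ∀ v, M v = N (e.symm v) := fun v => rfl
  have hMc : Continuous M := hN.comp (LinearMap.continuous_of_finiteDimensional e.symm.toLinearMap)
  have hMB : ∀ x, M (B x) = N x := fun x => by
    rw [hMdef, ← heB, LinearEquiv.symm_apply_apply]
  obtain ⟨u₀, hu₀, hmax⟩ := (isCompact_sphere (0 : E2) 1).exists_isMaxOn
    (NormedSpace.sphere_nonempty.2 zero_le_one) hMc.continuousOn
  rw [mem_sphere_zero_iff_norm] at hu₀
  have hMle : ∀ v, M v ≤ M u₀ * ‖v‖ := by
    intro v
    by_cases hv : v = 0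
    · simp [hv]
    have hvn : 0 < ‖v‖ := norm_pos_iff.2 hv
    have h1 : M (‖v‖⁻¹ • v) ≤ M u₀ := hmax (by
      rw [mem_sphere_zero_iff_norm, norm_smul, norm_inv, norm_norm, inv_mul_cancel₀ hvn.ne'])
    rw [map_smul_eq_mul, norm_inv, norm_norm, inv_mul_le_iff₀ hvn] at h1
    linarith
  have hM0 : 0 ≤ M u₀ := apply_nonneg M u₀
  have hdev : ∀ u : E2, ‖u‖ = 1 → |M u - 1| ≤ M u₀ * (ε / 4) := by
    intro u hu
    obtain ⟨x, hx1, hx2⟩ := hB u hu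
    rw [← hMB] at hx1
    have h1 : M (B x - u) ≤ M u₀ * (ε / 4) :=
      (hMle _).trans (mul_le_mul_of_nonneg_left hx2 hM0)
    have h2 := abs_sub_map_le_sub M (B x) u
    rw [hx1, abs_sub_comm] at h2
    exact h2.trans h1
  have hC : M u₀ * (1 - ε / 4) ≤ 1 := by
    have := (abs_le.1 (hdev u₀ hu₀)).2
    linarith
  have hlow : ∀ v, (1 - ε / 2) * ‖v‖ ≤ (1 - ε / 4) * M v := by
    intro v
    by_cases hv : v = 0
    · simp [hv]
    have hvn : 0 < ‖v‖ := norm_pos_iff.2 hv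
    have h1 := (abs_le.1 (hdev (‖v‖⁻¹ • v) (by
      rw [norm_smul, norm_inv, norm_norm, inv_mul_cancel₀ hvn.ne']))).1
    rw [map_smul_eq_mul, norm_inv, norm_norm] at h1
    have h2 : 1 - M u₀ * (ε / 4) ≤ M v / ‖v‖ := by
      rw [div_eq_mul_inv (M v), mul_comm (M v)]; linarith
    rw [le_div_iff₀ hvn] at h2
    have h3 : (1 - ε / 2) ≤ (1 - ε / 4) * (1 - M u₀ * (ε / 4)) := by nlinarith
    have h4 := mul_le_mul_of_nonneg_right h3 hvn.le
    have h5 := mul_le_mul_of_nonneg_left h2 (by linarith : (0 : ℝ) ≤ 1 - ε / 4)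
    linarith
  have hη : 0 < 1 - ε / 4 := by linarith
  have hη2 : 0 < 1 - ε / 2 := by linarith
  refine ⟨(1 - ε / 4) • e.symm.toLinearMap, (1 - ε / 2)⁻¹, ?_, ?_, ?_, ?_, ?_⟩
  · refine ⟨fun a b hab => ?_, fun y => ⟨(1 - ε / 4)⁻¹ • e y, ?_⟩⟩
    · simp only [LinearMap.smul_apply, LinearEquiv.coe_coe] at hab
      exact e.symm.injective (smul_right_injective _ hη.ne' hab)
    · simp only [LinearMap.smul_apply, LinearEquiv.coe_coe, map_smul, LinearEquiv.symm_apply_apply]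
      rw [smul_smul, inv_mul_cancel₀ hη.ne', one_smul]
  · rw [one_le_inv₀ hη2]; linarith
  · rw [inv_lt_iff_one_lt_mul₀ hη2]; nlinarith
  · rintro _ ⟨v, hv, rfl⟩
    rw [mem_closedBall_zero_iff] at hv
    rw [hK, LinearMap.smul_apply, map_smul_eq_mul, Real.norm_of_nonneg hη.le]
    have h1 : N (e.symm v) ≤ M u₀ := by
      have := hMle v
      rw [hMdef v] at this
      nlinarith
    calc (1 - ε / 4) * N (e.symm v) ≤ (1 - ε / 4) * M u₀ := mul_le_mul_of_nonneg_left h1 hη.le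
      _ ≤ 1 := by linarith
  · intro x hx
    rw [hK] at hx
    refine ⟨((1 - ε / 2) * (1 - ε / 4)⁻¹) • B x, ?_, ?_⟩
    · rw [mem_closedBall_zero_iff, norm_smul, Real.norm_of_nonneg (by positivity)]
      have h1 := hlow (B x)
      rw [hMB] at h1
      have h2 : (1 - ε / 4) * N x ≤ (1 - ε / 4) * 1 := mul_le_mul_of_nonneg_left hx hη.le
      rw [mul_right_comm, ← div_eq_mul_inv, div_le_one hη]
      linarith
    · simp only [LinearMap.smul_apply, LinearEquiv.coe_coe, map_smul]
      rw [← heB, LinearEquiv.symm_apply_apply, smul_smul, smul_smul]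
      rw [inv_mul_cancel_left₀ hη2.ne', inv_mul_cancel₀ hη.ne', one_smul]

/-! ### Areas of triangles -/

lemma volume_std_triangle :
    volume {v : E2 | 0 ≤ v 0 ∧ 0 ≤ v 1 ∧ v 0 + v 1 ≤ 1} ≤ ENNReal.ofReal (1 / 2) := by
  have hmp := (volume_preserving_finTwoArrow ℝ).comp (PiLp.volume_preserving_ofLp (Fin 2))
  have hset : {v : E2 | 0 ≤ v 0 ∧ 0 ≤ v 1 ∧ v 0 + v 1 ≤ 1} =
      (MeasurableEquiv.finTwoArrow ∘ WithLp.ofLp) ⁻¹'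
        {p : ℝ × ℝ | 0 ≤ p.1 ∧ 0 ≤ p.2 ∧ p.1 + p.2 ≤ 1} := by
    ext v; simp [MeasurableEquiv.finTwoArrow]
  have hcl : MeasurableSet {p : ℝ × ℝ | 0 ≤ p.1 ∧ 0 ≤ p.2 ∧ p.1 + p.2 ≤ 1} := by
    apply IsClosed.measurableSet
    exact (isClosed_le continuous_const continuous_fst).inter
      ((isClosed_le continuous_const continuous_snd).inter
        (isClosed_le (continuous_fst.add continuous_snd) continuous_const))
  rw [hset, hmp.measure_preimage hcl.nullMeasurableSet, Measure.volume_eq_prod,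
    Measure.prod_apply hcl]
  have hle : ∀ a : ℝ, volume (Prod.mk a ⁻¹' {p : ℝ × ℝ | 0 ≤ p.1 ∧ 0 ≤ p.2 ∧ p.1 + p.2 ≤ 1})
      ≤ (Set.Icc (0 : ℝ) 1).indicator (fun a => ENNReal.ofReal (1 - a)) a := by
    intro a
    by_cases ha : a ∈ Set.Icc (0 : ℝ) 1
    · rw [Set.indicator_of_mem ha]
      have : Prod.mk a ⁻¹' {p : ℝ × ℝ | 0 ≤ p.1 ∧ 0 ≤ p.2 ∧ p.1 + p.2 ≤ 1} ⊆ Set.Icc 0 (1 - a) := by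
        rintro b ⟨-, h2, h3⟩
        simp only at h2 h3
        exact ⟨h2, by linarith⟩
      refine (measure_mono this).trans ?_
      rw [Real.volume_Icc, sub_zero]
    · rw [Set.indicator_of_notMem ha, nonpos_iff_eq_zero]
      convert measure_empty (μ := (volume : Measure ℝ))
      ext b
      simp only [Set.mem_preimage, Set.mem_ofPred_eq, Set.mem_empty_iff_false, iff_false]
      rintro ⟨h1, h2, h3⟩
      exact ha ⟨h1, by linarith⟩
  refine (lintegral_mono hle).trans ?_
  rw [lintegral_indicator measurableSet_Icc, ← ofReal_integral_eq_lintegral_ofReal]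
  · apply ENNReal.ofReal_le_ofReal
    rw [integral_Icc_eq_integral_Ioc, ← intervalIntegral.integral_of_le zero_le_one]
    rw [intervalIntegral.integral_sub (by simp) (by simp)]
    simp
    norm_num
  · exact (continuous_const.sub continuous_id).integrableOn_Icc
  · filter_upwards [ae_restrict_mem measurableSet_Icc] with a ha
    simpa using ha.2

/-- The triangle `r • conv {0, a, b}`. -/
def tri (r : ℝ) (a b : E2) : Set E2 :=
  {z | ∃ s t : ℝ, 0 ≤ s ∧ 0 ≤ t ∧ s + t ≤ r ∧ z = s • a + t • b}

lemma volume_tri {r : ℝ} (hr : 0 < r) (a b : E2) :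
    volume (tri r a b) ≤ ENNReal.ofReal (r ^ 2 * |cr a b| / 2) := by
  let A : Matrix (Fin 2) (Fin 2) ℝ := !![r * a 0, r * b 0; r * a 1, r * b 1]
  let f : E2 →ₗ[ℝ] E2 := Matrix.toEuclideanLin A
  have hdet : LinearMap.det f = r ^ 2 * cr a b := by
    have : LinearMap.det f = A.det := by
      simp only [f, Matrix.toEuclideanLin, Matrix.toLpLin_eq_toLin]
      rw [LinearMap.det_toLin]
    rw [this, Matrix.det_fin_two_of]
    simp only [cr]; ring
  have hsub : tri r a b ⊆ f '' {v : E2 | 0 ≤ v 0 ∧ 0 ≤ v 1 ∧ v 0 + v 1 ≤ 1} := by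
    rintro z ⟨s, t, hs, ht, hst, rfl⟩
    refine ⟨!₂[s / r, t / r], ⟨by simp; positivity, by simp; positivity, ?_⟩, ?_⟩
    · simp
      rw [← add_div, div_le_one hr]; exact hst
    · ext i
      fin_cases i <;> simp [f, A, Matrix.toEuclideanLin, Matrix.toLpLin] <;> field_simp
  refine (measure_mono hsub).trans ?_
  rw [Measure.addHaar_image_linearMap, hdet, abs_mul, abs_of_pos (by positivity : 0 < r ^ 2)]
  calc _ ≤ ENNReal.ofReal (r ^ 2 * |cr a b|) * ENNReal.ofReal (1 / 2) := by
        gcongr; exact volume_std_triangle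
    _ = _ := by
        rw [← ENNReal.ofReal_mul (by positivity)]; congr 1; ring

/-! ### Inscribed polygons of a symmetric convex body -/

lemma inner_E2 (x y : E2) : inner ℝ x y = x 0 * y 0 + x 1 * y 1 := by
  simp [PiLp.inner_apply, Fin.sum_univ_two, mul_comm]

/-- The unit vector of angle `i π / n`. -/
def uu (n i : ℕ) : E2 := !₂[cos (i * (π / n)), sin (i * (π / n))]

/-- The point of the boundary of the unit ball of `N` in the direction of angle `i π / n`. -/
def vert (N : Seminorm ℝ E2) (n i : ℕ) : E2 := (N (uu n i))⁻¹ • uu n i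

lemma norm_uu (n i : ℕ) : ‖uu n i‖ = 1 := by
  rw [EuclideanSpace.norm_eq, Fin.sum_univ_two]
  simp [uu]

lemma norm_uu_sub (n i : ℕ) : ‖uu n i - uu n (i + 1)‖ ≤ 2 * (π / n) := by
  refine (norm_le_add_abs _).trans ?_
  have hpi := Real.pi_pos
  have h0 : |(i : ℝ) * (π / n) - ((i + 1 : ℕ) : ℝ) * (π / n)| = π / n := by
    rw [show (i : ℝ) * (π / n) - ((i + 1 : ℕ) : ℝ) * (π / n) = -(π / n) by push_cast; ring,
      abs_neg, abs_of_nonneg (by positivity)]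
  have h1 := Real.abs_cos_sub_cos_le (i * (π / n)) ((i + 1 : ℕ) * (π / n))
  have h2 := Real.abs_sin_sub_sin_le (i * (π / n)) ((i + 1 : ℕ) * (π / n))
  rw [h0] at h1 h2
  simp only [uu, PiLp.sub_apply, Matrix.cons_val_zero, Matrix.cons_val_one]
  linarith

lemma uu_anti {n : ℕ} (hn : 3 ≤ n) (i : ℕ) : uu n (i + n) = -uu n i := by
  have hn0 : (n : ℝ) ≠ 0 := by positivity
  have : ((i + n : ℕ) : ℝ) * (π / n) = i * (π / n) + π := by
    push_cast; field_simp
  ext k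
  fin_cases k <;> simp only [uu, this, Real.cos_add_pi, Real.sin_add_pi] <;> simp

lemma cr_uu (n i j : ℕ) : cr (uu n i) (uu n j) = sin (((j : ℝ) - i) * (π / n)) := by
  rw [sub_mul, Real.sin_sub]
  simp only [cr, uu, Matrix.cons_val_zero, Matrix.cons_val_one]
  ring

lemma cr_smul_right (c : ℝ) (a b : E2) : cr a (c • b) = c * cr a b := by simp [cr]; ring

section Body

variable {N : Seminorm ℝ E2} {r R : ℝ} {n : ℕ}

lemma N_uu_pos (hr : 0 < r) (hlow : ∀ x, r * ‖x‖ ≤ N x) (i : ℕ) : 0 < N (uu n i) := by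
  have := hlow (uu n i)
  rw [norm_uu] at this
  linarith

lemma N_vert (hr : 0 < r) (hlow : ∀ x, r * ‖x‖ ≤ N x) (i : ℕ) : N (vert N n i) = 1 := by
  have h := N_uu_pos (n := n) hr hlow i
  rw [vert, map_smul_eq_mul, norm_inv, Real.norm_of_nonneg h.le, inv_mul_cancel₀ h.ne']

lemma cr_vert (i j : ℕ) : cr (vert N n i) (vert N n j) =
    (N (uu n i))⁻¹ * ((N (uu n j))⁻¹ * sin (((j : ℝ) - i) * (π / n))) := by
  rw [vert, vert, cr_smul_left, cr_smul_right, cr_uu]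

lemma symPoly_vert (hr : 0 < r) (hlow : ∀ x, r * ‖x‖ ≤ N x) (hn : 3 ≤ n) :
    SymPoly n (vert N n) where
  anti i := by rw [vert, vert, uu_anti hn, map_neg_eq_map, smul_neg]
  pos i j hij hj := by
    rw [cr_vert]
    have h1 := N_uu_pos (n := n) hr hlow i
    have h2 := N_uu_pos (n := n) hr hlow j
    have hn0 : (0 : ℝ) < n := by positivity
    have hij' : (i : ℝ) < j := by exact_mod_cast hij
    have hj' : (j : ℝ) < i + n := by exact_mod_cast hj
    have : 0 < sin (((j : ℝ) - i) * (π / n)) := by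
      apply Real.sin_pos_of_pos_of_lt_pi
      · have := Real.pi_pos
        have := sub_pos.2 hij'
        positivity
      · rw [← mul_div_assoc, div_lt_iff₀ hn0, mul_comm]
        exact mul_lt_mul_of_pos_left (by linarith) Real.pi_pos
    positivity
  three := hn

lemma N_vert_sub (hr : 0 < r) (hlow : ∀ x, r * ‖x‖ ≤ N x) (hR : 0 < R) (hup : ∀ x, N x ≤ R * ‖x‖)
    (i : ℕ) : N (vert N n i - vert N n (i + 1)) ≤ 4 * R / r * (π / n) := by
  have h1 := N_uu_pos (n := n) hr hlow i
  have h2 := N_uu_pos (n := n) hr hlow (i + 1)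
  set a := uu n i
  set b := uu n (i + 1)
  have hra : r ≤ N a := by have := hlow a; rwa [norm_uu, mul_one] at this
  have hab : N (a - b) ≤ R * (2 * (π / n)) :=
    (hup _).trans (mul_le_mul_of_nonneg_left (norm_uu_sub n i) hR.le)
  have key : vert N n i - vert N n (i + 1)
      = (N a)⁻¹ • (a - b) + ((N a)⁻¹ - (N b)⁻¹) • b := by
    simp only [vert]
    module
  have hc : |(N a)⁻¹ - (N b)⁻¹| * N b ≤ (N a)⁻¹ * N (a - b) := by
    have e : |(N a)⁻¹ - (N b)⁻¹| * N b = (N a)⁻¹ * |N a - N b| := by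
      rw [inv_sub_inv h1.ne' h2.ne', abs_div, abs_of_pos (mul_pos h1 h2), abs_sub_comm]
      field_simp
    rw [e]
    exact mul_le_mul_of_nonneg_left (abs_sub_map_le_sub N a b) (by positivity)
  rw [key]
  refine (map_add_le_add N _ _).trans ?_
  rw [map_smul_eq_mul, map_smul_eq_mul, Real.norm_eq_abs, Real.norm_eq_abs,
    abs_of_pos (inv_pos.2 h1)]
  have hinv : (N a)⁻¹ ≤ r⁻¹ := inv_anti₀ hr hra
  have hfin : (N a)⁻¹ * N (a - b) ≤ r⁻¹ * (R * (2 * (π / n))) :=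
    mul_le_mul hinv hab (apply_nonneg _ _) (by positivity)
  have e2 : 4 * R / r * (π / n) = 2 * (r⁻¹ * (R * (2 * (π / n)))) := by ring
  linarith

lemma dd_vert_le (hr : 0 < r) (hlow : ∀ x, r * ‖x‖ ≤ N x) (i : ℕ) :
    dd (vert N n) i ≤ π / n / r ^ 2 := by
  have hpi := Real.pi_pos
  have hle : ∀ k, r ≤ N (uu n k) := fun k => by
    have := hlow (uu n k); rwa [norm_uu, mul_one] at this
  have h1 := N_uu_pos (n := n) hr hlow i
  have h2 := N_uu_pos (n := n) hr hlow (i + 1)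
  rw [dd, cr_vert]
  push_cast
  rw [add_sub_cancel_left, one_mul]
  have hs : sin (π / n) ≤ π / n := Real.sin_le (by positivity)
  calc _ ≤ (N (uu n i))⁻¹ * ((N (uu n (i + 1)))⁻¹ * (π / n)) := by gcongr
    _ ≤ r⁻¹ * (r⁻¹ * (π / n)) := by gcongr <;> apply hle
    _ = _ := by field_simp

lemma sum_dd_vert_ge (hr : 0 < r) (hlow : ∀ x, r * ‖x‖ ≤ N x) (hR : 0 < R)
    (hup : ∀ x, N x ≤ R * ‖x‖) (hn : 3 ≤ n) :
    2 / R ^ 2 ≤ ∑ i ∈ Finset.range n, dd (vert N n) i := by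
  have hpi := Real.pi_pos
  have hn0 : (0 : ℝ) < n := by positivity
  have hn3 : (3 : ℝ) ≤ n := by exact_mod_cast hn
  have hle : ∀ k, N (uu n k) ≤ R := fun k => by
    have := hup (uu n k); rwa [norm_uu, mul_one] at this
  have hterm : ∀ i ∈ Finset.range n, 2 / R ^ 2 / n ≤ dd (vert N n) i := by
    intro i _
    rw [dd, cr_vert]
    push_cast
    rw [add_sub_cancel_left, one_mul]
    have hs : 2 / π * (π / n) ≤ sin (π / n) := Real.mul_le_sin (by positivity)
      (by rw [div_le_div_iff₀ hn0 (by norm_num)]; nlinarith)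
    have e : 2 / R ^ 2 / n = R⁻¹ * (R⁻¹ * (2 / π * (π / n))) := by field_simp
    rw [e]
    have h1 := N_uu_pos (n := n) hr hlow i
    have h2 := N_uu_pos (n := n) hr hlow (i + 1)
    gcongr <;> apply hle
  have := Finset.card_nsmul_le_sum _ _ _ hterm
  rw [Finset.card_range, nsmul_eq_mul, mul_div_cancel₀ _ hn0.ne'] at this
  exact this

/-- Every vector lies in the cone spanned by two consecutive vertices. -/
lemma exists_cone (hr : 0 < r) (hlow : ∀ x, r * ‖x‖ ≤ N x) (hn : 3 ≤ n) (z : E2) :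
    ∃ i < 2 * n, ∃ s t : ℝ, 0 ≤ s ∧ 0 ≤ t ∧ z = s • vert N n i + t • vert N n (i + 1) := by
  have hpi := Real.pi_pos
  have hn0 : (0 : ℝ) < n := by positivity
  have hn3 : (3 : ℝ) ≤ n := by exact_mod_cast hn
  obtain ⟨θ, h0, h1, hz0, hz1⟩ := exists_polar z
  obtain ⟨i, hi, hi1, hi2⟩ := exists_bracket (φ := fun k : ℕ => (k : ℝ) * (π / n)) (ψ := θ)
    (N := 2 * n) (by simpa using h0) (by
      push_cast
      rw [mul_assoc, mul_div_cancel₀ _ hn0.ne']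
      exact h1)
  push_cast at hi2
  have hp1 := N_uu_pos (n := n) hr hlow i
  have hp2 := N_uu_pos (n := n) hr hlow (i + 1)
  have hlt : π / n < π := by rw [div_lt_iff₀ hn0]; nlinarith
  have hspos : 0 < sin (π / n) := Real.sin_pos_of_pos_of_lt_pi (by positivity) hlt
  have hs1 : 0 ≤ sin ((i + 1) * (π / n) - θ) :=
    Real.sin_nonneg_of_nonneg_of_le_pi (by linarith) (by linarith)
  have hs2 : 0 ≤ sin (θ - i * (π / n)) :=
    Real.sin_nonneg_of_nonneg_of_le_pi (by linarith) (by linarith)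
  refine ⟨i, hi, ‖z‖ * sin ((i + 1) * (π / n) - θ) / sin (π / n) * N (uu n i),
    ‖z‖ * sin (θ - i * (π / n)) / sin (π / n) * N (uu n (i + 1)), by positivity, by positivity, ?_⟩
  simp only [vert, smul_smul]
  rw [mul_assoc _ (N (uu n i)), mul_inv_cancel₀ hp1.ne', mul_assoc _ (N (uu n (i + 1))),
    mul_inv_cancel₀ hp2.ne', mul_one, mul_one]
  have hsn : sin (π / n) = sin ((i + 1) * (π / n) - i * (π / n)) := by congr 1; ring
  rw [hsn] at hspos ⊢
  simp only [uu, Nat.cast_add, Nat.cast_one]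
  generalize (i + 1 : ℝ) * (π / n) = β at *
  generalize (i : ℝ) * (π / n) = α at *
  have hne := hspos.ne'
  ext k
  fin_cases k
  · simp only [Fin.zero_eta, hz0, PiLp.add_apply, PiLp.smul_apply, smul_eq_mul,
      Matrix.cons_val_zero]
    field_simp
    simp only [Real.sin_sub]
    ring
  · simp only [Fin.mk_one, hz1, PiLp.add_apply, PiLp.smul_apply, smul_eq_mul,
      Matrix.cons_val_one, Matrix.cons_val_zero]
    field_simp
    simp only [Real.sin_sub]
    ring

lemma sum_two_periods {F : ℕ → ℝ} (hF : ∀ i, F (i + n) = F i) :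
    ∑ i ∈ Finset.range (2 * n), F i / 2 = ∑ i ∈ Finset.range n, F i := by
  rw [two_mul, Finset.sum_range_add, ← Finset.sum_div, ← Finset.sum_div]
  simp only [add_comm n, hF]
  ring

lemma volume_body_le (hr : 0 < r) (hlow : ∀ x, r * ‖x‖ ≤ N x) (hn : 3 ≤ n) {η : ℝ} (hη1 : η < 1)
    (hη : ∀ i, N (vert N n i - vert N n (i + 1)) ≤ η) :
    volume {x | N x ≤ 1} ≤
      ENNReal.ofReal (((1 - η)⁻¹) ^ 2 * ∑ i ∈ Finset.range n, dd (vert N n) i) := by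
  have h := symPoly_vert hr hlow hn
  have hρ : 0 < (1 - η)⁻¹ := inv_pos.2 (by linarith)
  have hsub : {x | N x ≤ 1} ⊆ ⋃ i ∈ Finset.range (2 * n),
      tri (1 - η)⁻¹ (vert N n i) (vert N n (i + 1)) := by
    intro z hz
    obtain ⟨i, hi, s, t, hs, ht, hzz⟩ := exists_cone hr hlow hn z
    refine Set.mem_biUnion (Finset.mem_coe.2 (Finset.mem_range.2 hi)) ⟨s, t, hs, ht, ?_, hzz⟩
    have e : (s + t) • vert N n i = z + t • (vert N n i - vert N n (i + 1)) := by
      rw [hzz]; module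
    have h1 : N ((s + t) • vert N n i) ≤ 1 + t * η := by
      rw [e]
      refine (map_add_le_add N _ _).trans ?_
      rw [map_smul_eq_mul, Real.norm_of_nonneg ht]
      exact add_le_add hz (mul_le_mul_of_nonneg_left (hη i) ht)
    rw [map_smul_eq_mul, N_vert hr hlow, mul_one, Real.norm_of_nonneg (by positivity)] at h1
    have hη0 : 0 ≤ η := (apply_nonneg N _).trans (hη i)
    rw [← one_div, le_div_iff₀ (by linarith)]
    nlinarith
  refine (measure_mono hsub).trans ((measure_biUnion_finset_le _ _).trans ?_)
  refine (Finset.sum_le_sum fun i _ => volume_tri hρ _ _).trans ?_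
  rw [← ENNReal.ofReal_sum_of_nonneg (fun i _ => by positivity)]
  apply ENNReal.ofReal_le_ofReal
  rw [← sum_two_periods h.dd_per, Finset.mul_sum]
  refine le_of_eq (Finset.sum_congr rfl fun i _ => ?_)
  have := h.dd_pos i
  rw [dd] at this ⊢
  rw [abs_of_pos this]
  ring

/-- The vertex of the polar polygon dual to the edge from `x i` to `x (i + 1)`. -/
def dualVert (x : ℕ → E2) (i : ℕ) : E2 :=
  !₂[(x (i + 1) 1 - x i 1) / dd x i, -(x (i + 1) 0 - x i 0) / dd x i]

lemma cr_dualVert {x : ℕ → E2} (h : SymPoly n x) (i : ℕ) :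
    cr (dualVert x i) (dualVert x (i + 1)) = pp x i := by
  have h1 := (h.dd_pos i).ne'
  have h2 := (h.dd_pos (i + 1)).ne'
  simp only [cr, dualVert, pp, Matrix.cons_val_zero, Matrix.cons_val_one]
  field_simp
  simp only [dd, cr, show i + 1 + 1 = i + 2 by ring]
  ring

/-- Convexity of the polygon: `x (i + 1)` is a combination of its neighbours, and its `N`-norm `1`
is at most the sum of the coefficients. -/
lemma pp_vert_nonneg (hr : 0 < r) (hlow : ∀ x, r * ‖x‖ ≤ N x) (hn : 3 ≤ n) (i : ℕ) :
    0 ≤ pp (vert N n) i := by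
  have h := symPoly_vert hr hlow hn
  have hd1 := h.dd_pos i
  have hd2 := h.dd_pos (i + 1)
  have hD := h.pos i (i + 2) (by omega) (by omega)
  have hN := N_vert (n := n) hr hlow
  generalize vert N n = x at *
  have e : cr (x i) (x (i + 2)) • x (i + 1) = dd x (i + 1) • x i + dd x i • x (i + 2) := by
    ext k
    fin_cases k <;> simp [dd, cr] <;> ring
  have h1 : N (cr (x i) (x (i + 2)) • x (i + 1)) ≤ dd x (i + 1) + dd x i := by
    rw [e]
    refine (map_add_le_add N _ _).trans ?_
    rw [map_smul_eq_mul, map_smul_eq_mul, hN, hN, Real.norm_of_nonneg hd1.le,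
      Real.norm_of_nonneg hd2.le, mul_one, mul_one]
  rw [map_smul_eq_mul, hN, mul_one, Real.norm_of_nonneg hD.le] at h1
  unfold pp
  exact div_nonneg (by linarith) (by positivity)

/-- A point of the polar polygon lies in the triangle dual to any vertex at which the
corresponding linear functional is maximal. -/
lemma mem_dual_tri {x : ℕ → E2} (h : SymPoly n x) {i : ℕ} (hp : 0 ≤ pp x i) {y : E2}
    (hmax : ∀ k, inner ℝ (x k) y ≤ inner ℝ (x (i + 1)) y) (hy : inner ℝ (x (i + 1)) y ≤ 1) :
    y ∈ tri 1 (dualVert x i) (dualVert x (i + 1)) := by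
  have hd1 := h.dd_pos i
  have hd2 := h.dd_pos (i + 1)
  have m0 := hmax i
  have m2 := hmax (i + 2)
  have m3 := hmax (i + 1 + n)
  rw [h.anti, inner_neg_left] at m3
  simp only [inner_E2] at m0 m2 m3 hy
  have hpd : pp x i * (dd x i * dd x (i + 1)) = dd x i + dd x (i + 1) - cr (x i) (x (i + 2)) := by
    unfold pp
    field_simp
  have edd2 : dd x (i + 1) = cr (x (i + 1)) (x (i + 2)) := rfl
  rcases hp.eq_or_lt with hp0 | hp0
  · -- three collinear vertices: `y` is orthogonal to their common line
    rw [← hp0, zero_mul] at hpd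
    set c := x (i + 1) 0 * y 0 + x (i + 1) 1 * y 1 with hc
    refine ⟨c, 0, by linarith, le_rfl, by linarith, ?_⟩
    have horth : (x (i + 1) 0 - x i 0) * y 0 + (x (i + 1) 1 - x i 1) * y 1 = 0 := by
      have e : dd x (i + 1) * ((x (i + 1) 0 - x i 0) * y 0 + (x (i + 1) 1 - x i 1) * y 1)
          = -(dd x i * ((x (i + 1) 0 - x (i + 2) 0) * y 0
            + (x (i + 1) 1 - x (i + 2) 1) * y 1)) := by
        have : dd x (i + 1) * ((x (i + 1) 0 - x i 0) * y 0 + (x (i + 1) 1 - x i 1) * y 1)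
          + (dd x i * ((x (i + 1) 0 - x (i + 2) 0) * y 0 + (x (i + 1) 1 - x (i + 2) 1) * y 1))
          = (dd x i + dd x (i + 1) - cr (x i) (x (i + 2))) * c := by
          rw [hc, edd2]
          simp only [dd, cr]
          ring
        rw [← hpd, zero_mul] at this
        linarith
      have p1 : 0 ≤ (x (i + 1) 0 - x i 0) * y 0 + (x (i + 1) 1 - x i 1) * y 1 := by linarith
      have p2 : 0 ≤ dd x i * ((x (i + 1) 0 - x (i + 2) 0) * y 0
            + (x (i + 1) 1 - x (i + 2) 1) * y 1) := mul_nonneg hd1.le (by linarith)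
      nlinarith
    ext k
    fin_cases k
    · simp only [Fin.zero_eta, PiLp.add_apply, PiLp.smul_apply, dualVert, smul_eq_mul,
        Matrix.cons_val_zero, zero_mul, add_zero]
      rw [← mul_div_assoc, eq_div_iff hd1.ne', hc]
      simp only [dd, cr]
      linear_combination (-x (i + 1) 1) * horth
    · simp only [Fin.mk_one, PiLp.add_apply, PiLp.smul_apply, dualVert, smul_eq_mul,
        Matrix.cons_val_one, Matrix.cons_val_zero, zero_mul, add_zero]
      rw [← mul_div_assoc, eq_div_iff hd1.ne', hc]
      simp only [dd, cr]
      linear_combination (x (i + 1) 0) * horth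
  · have hq : 0 < dd x i + dd x (i + 1) - cr (x i) (x (i + 2)) := by
      rw [← hpd]; positivity
    set q := dd x i + dd x (i + 1) - cr (x i) (x (i + 2)) with hqd
    have hsum : (((x (i + 1) 0 - x (i + 2) 0) * y 0 + (x (i + 1) 1 - x (i + 2) 1) * y 1) * dd x i / q)
        + (((x (i + 1) 0 - x i 0) * y 0 + (x (i + 1) 1 - x i 1) * y 1) * dd x (i + 1) / q)
        = x (i + 1) 0 * y 0 + x (i + 1) 1 * y 1 := by
      rw [← add_div, div_eq_iff hq.ne', hqd, edd2]
      simp only [dd, cr]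
      ring
    refine ⟨((x (i + 1) 0 - x (i + 2) 0) * y 0 + (x (i + 1) 1 - x (i + 2) 1) * y 1) * dd x i / q,
      ((x (i + 1) 0 - x i 0) * y 0 + (x (i + 1) 1 - x i 1) * y 1) * dd x (i + 1) / q,
      div_nonneg (mul_nonneg (by linarith) hd1.le) hq.le,
      div_nonneg (mul_nonneg (by linarith) hd2.le) hq.le, by rw [hsum]; exact hy, ?_⟩
    ext k
    fin_cases k
    · simp only [Fin.zero_eta, PiLp.add_apply, PiLp.smul_apply, dualVert, smul_eq_mul,
        Matrix.cons_val_zero]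
      field_simp
      rw [hqd, edd2]
      simp only [dd, cr]
      ring
    · simp only [Fin.mk_one, PiLp.add_apply, PiLp.smul_apply, dualVert, smul_eq_mul,
        Matrix.cons_val_one, Matrix.cons_val_zero]
      field_simp
      rw [hqd, edd2]
      simp only [dd, cr]
      ring

lemma volume_polar_le (hr : 0 < r) (hlow : ∀ x, r * ‖x‖ ≤ N x) (hn : 3 ≤ n) :
    volume (polarBody {x | N x ≤ 1}) ≤
      ENNReal.ofReal (∑ i ∈ Finset.range n, pp (vert N n) i) := by
  have h := symPoly_vert hr hlow hn
  have hp := pp_vert_nonneg (n := n) hr hlow hn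
  have hsub : polarBody {x | N x ≤ 1} ⊆ ⋃ i ∈ Finset.range (2 * n),
      tri 1 (dualVert (vert N n) i) (dualVert (vert N n) (i + 1)) := by
    intro y hy
    obtain ⟨i, hi, hmax⟩ := Finset.exists_max_image (Finset.range (2 * n))
      (fun i => inner ℝ (vert N n (i + 1)) y) ⟨0, Finset.mem_range.2 (by omega)⟩
    refine Set.mem_biUnion (Finset.mem_coe.2 hi) (mem_dual_tri h (hp i) ?_ ?_)
    · have hper : Function.Periodic (fun k => inner ℝ (vert N n k) y) (2 * n) := by
        intro k
        dsimp only
        rw [two_mul, ← add_assoc, h.anti, h.anti, neg_neg]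
      intro k
      have hk := hper.map_mod_nat k
      rw [← hk]
      have hlt : k % (2 * n) < 2 * n := Nat.mod_lt _ (by omega)
      rcases Nat.eq_zero_or_pos (k % (2 * n)) with h0 | h0
      · rw [h0]
        have e := hper 0
        simp only [zero_add] at e
        rw [← e]
        have := hmax (2 * n - 1) (Finset.mem_range.2 (by omega))
        rwa [show 2 * n - 1 + 1 = 2 * n by omega] at this
      · have := hmax (k % (2 * n) - 1) (Finset.mem_range.2 (by omega))
        rwa [show k % (2 * n) - 1 + 1 = k % (2 * n) by omega] at this
    · exact hy _ (N_vert hr hlow (i + 1)).le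
  refine (measure_mono hsub).trans ((measure_biUnion_finset_le _ _).trans ?_)
  refine (Finset.sum_le_sum fun i _ => volume_tri one_pos _ _).trans ?_
  rw [← ENNReal.ofReal_sum_of_nonneg (fun i _ => by positivity)]
  apply ENNReal.ofReal_le_ofReal
  rw [← sum_two_periods h.pp_per]
  refine le_of_eq (Finset.sum_congr rfl fun i _ => ?_)
  rw [cr_dualVert h, abs_of_nonneg (hp i)]
  ring

end Body

/-! ### Stability for unit balls -/

lemma exists_seminorm {K : Set E2} (hK : IsCompact K) (hconv : Convex ℝ K)
    (h0 : (0 : E2) ∈ interior K) (hsymm : K = -K) :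
    ∃ (N : Seminorm ℝ E2) (r R : ℝ), Continuous N ∧ (∀ x, x ∈ K ↔ N x ≤ 1) ∧ 0 < r ∧ 0 < R ∧
      (∀ x, r * ‖x‖ ≤ N x) ∧ ∀ x, N x ≤ R * ‖x‖ := by
  have hnhds : K ∈ nhds (0 : E2) := mem_interior_iff_mem_nhds.1 h0
  have hneg : ∀ x ∈ K, -x ∈ K := fun x hx => by rw [hsymm] at hx; exact hx
  have hbal : Balanced ℝ K := by
    rw [balanced_iff_smul_mem]
    intro a ha x hx
    rw [Real.norm_eq_abs, abs_le] at ha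
    -- `a x` is a convex combination of `x` and `-x`
    have := hconv hx (hneg x hx) (a := (1 + a) / 2) (b := (1 - a) / 2) (by linarith)
      (by linarith) (by ring)
    convert this using 1
    module
  have habs : Absorbent ℝ K := absorbent_nhds_zero hnhds
  obtain ⟨ρ, hρ, hball⟩ := Metric.mem_nhds_iff.1 hnhds
  obtain ⟨C, hC, hsub⟩ := hK.isBounded.subset_closedBall_lt 0 0
  refine ⟨gaugeSeminorm hbal hconv habs, C⁻¹, ρ⁻¹, continuous_gauge hconv hnhds, ?_,
    inv_pos.2 hC, inv_pos.2 hρ, ?_, ?_⟩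
  · intro x
    change _ ↔ gauge K x ≤ 1
    rw [gauge_le_one_iff_mem_closure hconv hnhds, hK.isClosed.closure_eq]
  · intro x
    change _ ≤ gauge K x
    have := le_gauge_of_subset_closedBall (x := x) habs hC.le hsub
    rwa [inv_mul_eq_div]
  · intro x
    change gauge K x ≤ _
    rw [inv_mul_eq_div, le_div_iff₀ hρ, mul_comm]
    exact mul_gauge_le_norm hball

lemma exists_large_n (a b : ℝ) {p q : ℝ} (hp : 0 < p) (hq : 0 < q) :
    ∃ n : ℕ, 3 ≤ n ∧ a * (π / n) ≤ p ∧ b * (π / n) < q := by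
  have ht : Filter.Tendsto (fun n : ℕ => π / (n : ℝ)) Filter.atTop (nhds 0) :=
    tendsto_const_div_atTop_nhds_zero_nat π
  have ha := ht.const_mul a
  have hb := ht.const_mul b
  rw [mul_zero] at ha hb
  have := (Filter.eventually_ge_atTop 3).and
    ((ha.eventually_le_const hp).and (hb.eventually_lt_const hq))
  exact this.exists

/-- The linear map with coordinate functions `cr z₀` and `cr z₁`. -/
def crMap (z₀ z₁ : E2) : E2 →ₗ[ℝ] E2 where
  toFun x := !₂[cr z₀ x, cr z₁ x]
  map_add' x y := by ext k; fin_cases k <;> simp [cr] <;> ring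
  map_smul' c x := by ext k; fin_cases k <;> simp [cr] <;> ring

/-- The dichotomy: either the volume product is at most `π² (1 - 8 ε³)`, or the polygon inscribed
with a fine enough mesh is almost extremal and yields an ellipse close to the body. -/
lemma volume_product_le_or_sandwich {N : Seminorm ℝ E2} {r R ε : ℝ} (hr : 0 < r) (hR : 0 < R)
    (hN : Continuous N) (hlow : ∀ x, r * ‖x‖ ≤ N x) (hup : ∀ x, N x ≤ R * ‖x‖)
    (hε : 0 < ε) (hε' : ε < 1 / 10000000) :
    volume {x | N x ≤ 1} * volume (polarBody {x | N x ≤ 1}) ≤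
        ENNReal.ofReal (π ^ 2 * (1 - 8 * ε ^ 3)) ∨
      ∃ (T : E2 →ₗ[ℝ] E2) (lam : ℝ), Function.Bijective T ∧
          1 ≤ lam ∧ lam < 1 + ε ∧
          ⇑T '' Metric.closedBall (0 : E2) 1 ⊆ {x | N x ≤ 1} ∧
          {x | N x ≤ 1} ⊆ (fun x => lam • T x) '' Metric.closedBall (0 : E2) 1 := by
  have hpi := Real.pi_pos
  have hε3 : 0 < ε ^ 3 := by positivity
  have hε3' : ε ^ 3 < 1 / 100 := by
    have : ε ^ 3 ≤ ε := pow_le_of_le_one hε.le (by linarith) (by norm_num)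
    linarith
  obtain ⟨n, hn, hn1, hn2⟩ := exists_large_n (4 * R / r) (π * (R ^ 2 / 2) / r ^ 2)
    (p := ε ^ 3 / 4) (q := ε / 100) (by positivity) (by positivity)
  have h := symPoly_vert hr hlow hn
  have hV := volume_body_le (η := ε ^ 3 / 4) hr hlow hn (by linarith)
    (fun i => (N_vert_sub hr hlow hR hup i).trans hn1)
  have hV' := volume_polar_le hr hlow hn
  have hSge := sum_dd_vert_ge hr hlow hR hup hn
  have hmesh0 : ∀ i, dd (vert N n) i ≤ π / n / r ^ 2 := dd_vert_le hr hlow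
  have hQ : 0 ≤ ∑ i ∈ Finset.range n, pp (vert N n) i :=
    Finset.sum_nonneg fun i _ => pp_vert_nonneg hr hlow hn i
  set S := ∑ i ∈ Finset.range n, dd (vert N n) i with hSdef
  set Q := ∑ i ∈ Finset.range n, pp (vert N n) i with hQdef
  have hSpos : 0 < S := lt_of_lt_of_le (by positivity) hSge
  have hη : 0 < 1 - ε ^ 3 / 4 := by linarith
  have hprod : volume {x | N x ≤ 1} * volume (polarBody {x | N x ≤ 1}) ≤
      ENNReal.ofReal (((1 - ε ^ 3 / 4)⁻¹) ^ 2 * (S * Q)) := by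
    refine (mul_le_mul' hV hV').trans ?_
    rw [← ENNReal.ofReal_mul (by positivity), mul_assoc]
  rcases le_or_gt (((1 - ε ^ 3 / 4)⁻¹) ^ 2 * (S * Q)) (π ^ 2 * (1 - 8 * ε ^ 3)) with hle | hgt
  · exact Or.inl (hprod.trans (ENNReal.ofReal_le_ofReal hle))
  right
  have hSQ : π ^ 2 * (1 - 9 * ε ^ 3) ≤ S * Q := by
    rw [inv_pow, inv_mul_eq_div, lt_div_iff₀ (by positivity)] at hgt
    refine le_trans ?_ hgt.le
    rw [mul_assoc]
    refine mul_le_mul_of_nonneg_left ?_ (by positivity)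
    nlinarith [sq_nonneg (ε ^ 3), mul_pos hε3 hε3]
  have mesh : ∀ i, π / S * dd (vert N n) i < ε / 100 := by
    intro i
    refine lt_of_le_of_lt ?_ hn2
    have hS1 : π / S ≤ π * (R ^ 2 / 2) := by
      rw [div_le_iff₀ hSpos]
      have : 1 ≤ R ^ 2 / 2 * S := by
        calc (1 : ℝ) = R ^ 2 / 2 * (2 / R ^ 2) := by field_simp
          _ ≤ _ := by gcongr
      rw [mul_assoc]
      exact le_mul_of_one_le_right hpi.le this
    calc π / S * dd (vert N n) i ≤ π * (R ^ 2 / 2) * (π / n / r ^ 2) :=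
          mul_le_mul hS1 (hmesh0 i) (h.dd_pos i).le (by positivity)
      _ = _ := by ring
  obtain ⟨z₀, z₁, hz⟩ := polygon_stability h hSdef hε hε' mesh hSQ
  refine sandwich (fun _ => Iff.rfl) hN (crMap z₀ z₁) hε (by linarith) fun u hu => ?_
  obtain ⟨j, hj⟩ := hz u hu
  exact ⟨vert N n j, N_vert hr hlow j, hj⟩

/-- Stability of the planar Blaschke–Santaló inequality in the o-symmetric case:
for any c < 8, for sufficiently small ε, if the Banach–Mazur distance of K from the
ellipses is at least 1 + ε, then V(K)·V(K*) ≤ π²(1 − c·ε³). -/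
theorem blaschke_santalo_stability_symmetric (c : ℝ) (hc : c < 8) :
    ∃ ε₀ : ℝ, 0 < ε₀ ∧
      ∀ ε ∈ Set.Ioo 0 ε₀,
      ∀ K : Set E2, IsCompact K → Convex ℝ K → (interior K).Nonempty →
      (0 : E2) ∈ interior K → K = -K →
      (¬ ∃ (T : E2 →ₗ[ℝ] E2) (lam : ℝ), Function.Bijective T ∧
          1 ≤ lam ∧ lam < 1 + ε ∧
          ⇑T '' Metric.closedBall (0 : E2) 1 ⊆ K ∧
          K ⊆ (fun x => lam • T x) '' Metric.closedBall (0 : E2) 1) →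
      volume K * volume (polarBody K) ≤
        ENNReal.ofReal (π ^ 2 * (1 - c * ε ^ 3)) := by
  refine ⟨1 / 10000000, by norm_num, ?_⟩
  rintro ε ⟨hε, hε'⟩ K hK hconv - h0 hsymm hfar
  obtain ⟨N, r, R, hN, hKN, hr, hR, hlow, hup⟩ := exists_seminorm hK hconv h0 hsymm
  obtain rfl : K = {x | N x ≤ 1} := Set.ext hKN
  refine ((volume_product_le_or_sandwich hr hR hN hlow hup hε hε').resolve_right hfar).trans ?_
  apply ENNReal.ofReal_le_ofReal
  gcongr
end
end

section
/- Let d ≥ 2 and let M ⊂ ℝ^d be a convex body. The function f(z) = V((M − z)*), defined for z in the interior of M, is strictly convex, tends to +∞ as z approaches the boundary of M, and attains its minimum at a unique point s(M) in the interior of M. -/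
/-!
Let `h` be the support function of `M`. Then `(M - z)* = {y | h y - ⟪z, y⟫ ≤ 1}` is the unit
sublevel set of a positively homogeneous function, so Tonelli's theorem gives
`∫ exp (⟪z, y⟫ - h y) dy = d! * V((M - z)*)` (`lintegral_exp_support`).

*Strict convexity.* For fixed `y` the integrand is convex in `z`, and its convexity inequality
between `z₁` and `z₂` is strict on the nonempty open set `{y | ⟪z₁, y⟫ ≠ ⟪z₂, y⟫}`; integrate.

*Blow-up.* If `z` is at distance less than `δ` from a frontier point `p`, and `u` is a unit outer
normal of `M` at `p`, then `⟪x - z, u⟫ ≤ δ` on `M`. As `M` has bounded diameter, `(M - z)*`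
contains a ball of fixed radius `r` swept along the segment from `0` to `u / (2δ)`, and therefore
about `1 / (4 r δ)` disjoint balls of radius `r` (`exists_volume_gt_near_frontier`).

*Minimum.* The function is convex, hence continuous, on the open set `interior M`; by the blow-up
its infimum is that over a compact subset. Strict convexity gives uniqueness.
-/

open MeasureTheory Real
open scoped Pointwise RealInnerProductSpace ENNReal

noncomputable section

/-- The polar body of the translate K − z:
`(K − z)* = {y : ⟪x − z, y⟫ ≤ 1 for all x ∈ K}`. -/
def translatePolar {d : ℕ} (K : Set (EuclideanSpace ℝ (Fin d)))
    (z : EuclideanSpace ℝ (Fin d)) : Set (EuclideanSpace ℝ (Fin d)) :=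
  {y | ∀ x ∈ K, ⟪x - z, y⟫ ≤ 1}

/-- s is the Santaló point of K: it lies in the interior of K and minimizes
the volume of the polar of the corresponding translate. -/
def IsSantaloPoint {d : ℕ} (K : Set (EuclideanSpace ℝ (Fin d)))
    (s : EuclideanSpace ℝ (Fin d)) : Prop :=
  s ∈ interior K ∧
    ∀ z ∈ interior K, volume (translatePolar K s) ≤ volume (translatePolar K z)

/-- κ_d, the volume of the d-dimensional Euclidean unit ball, as a real number. -/
def kappa (d : ℕ) : ℝ :=
  (volume (Metric.closedBall (0 : EuclideanSpace ℝ (Fin d)) 1)).toReal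


/-! ### The support function and the integral formula -/

/-- The support function `y ↦ sup_{x ∈ M} ⟪x, y⟫` (meaningful for nonempty bounded `M`). -/
def supportFn {d : ℕ} (M : Set (EuclideanSpace ℝ (Fin d))) (y : EuclideanSpace ℝ (Fin d)) : ℝ :=
  sSup ((fun x => ⟪x, y⟫) '' M)

section

variable {d : ℕ} {M : Set (EuclideanSpace ℝ (Fin d))}

lemma supportFn_le_iff (hM : IsCompact M) (hne : M.Nonempty) (y : EuclideanSpace ℝ (Fin d))
    (t : ℝ) : supportFn M y ≤ t ↔ ∀ x ∈ M, ⟪x, y⟫ ≤ t := by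
  have hb : BddAbove ((fun x => ⟪x, y⟫) '' M) :=
    (hM.image (by fun_prop)).bddAbove
  rw [supportFn, csSup_le_iff hb (hne.image _)]
  simp

lemma measurable_supportFn (hM : IsCompact M) (hne : M.Nonempty) :
    Measurable (supportFn M) := by
  refine measurable_of_Iic fun t => IsClosed.measurableSet ?_
  have : supportFn M ⁻¹' Set.Iic t = ⋂ x ∈ M, {y | ⟪x, y⟫ ≤ t} := by
    ext y
    simp [supportFn_le_iff hM hne]
  rw [this]
  exact isClosed_biInter fun x _ => isClosed_le (by fun_prop) continuous_const

lemma inner_le_supportFn (hM : IsCompact M) {x : EuclideanSpace ℝ (Fin d)} (hx : x ∈ M)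
    (y : EuclideanSpace ℝ (Fin d)) : ⟪x, y⟫ ≤ supportFn M y :=
  (supportFn_le_iff hM ⟨x, hx⟩ y _).1 le_rfl x hx

/-- Dilates of the polar are the sublevel sets of `supportFn M y - ⟪z, y⟫`. -/
lemma sublevel_eq_smul (hM : IsCompact M) (hne : M.Nonempty) (z : EuclideanSpace ℝ (Fin d))
    {t : ℝ} (ht : 0 < t) :
    {y | supportFn M y - ⟪z, y⟫ ≤ t} = t • translatePolar M z := by
  ext y
  rw [Set.mem_smul_set_iff_inv_smul_mem₀ ht.ne']
  simp only [translatePolar, Set.mem_ofPred_eq, sub_le_iff_le_add, supportFn_le_iff hM hne,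
    inner_smul_right, inner_sub_left]
  refine forall₂_congr fun x _ => ?_
  rw [inv_mul_le_iff₀ ht, mul_add, mul_inv_cancel_left₀ ht.ne', mul_one]

lemma translatePolar_subset_closedBall {z : EuclideanSpace ℝ (Fin d)} {r : ℝ} (hr : 0 < r)
    (hz : Metric.closedBall z r ⊆ M) :
    translatePolar M z ⊆ Metric.closedBall 0 (1 / r) := by
  intro y hy
  rw [mem_closedBall_zero_iff]
  rcases eq_or_ne y 0 with rfl | hy0
  · simp; positivity
  have hn : 0 < ‖y‖ := norm_pos_iff.2 hy0
  have := hy (z + (r / ‖y‖) • y) (hz (by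
    simp [norm_smul, abs_of_pos hr, hn.ne']))
  rw [add_sub_cancel_left, inner_smul_left, real_inner_self_eq_norm_sq] at this
  simp only [conj_trivial] at this
  rw [le_div_iff₀ hr]
  field_simp at this
  linarith

lemma volume_translatePolar_ne_top {z : EuclideanSpace ℝ (Fin d)} (hz : z ∈ interior M) :
    volume (translatePolar M z) ≠ ⊤ := by
  obtain ⟨r, hr, h⟩ := Metric.nhds_basis_closedBall.mem_iff.1 (mem_interior_iff_mem_nhds.1 hz)
  exact ((measure_mono (translatePolar_subset_closedBall hr h)).trans_lt
    measure_closedBall_lt_top).ne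

/-- The volume of the polar as a Laplace-type integral: write `exp (-g)` as the integral of
`exp (-t)` over `t ≥ g`, swap the integrals, and scale the sublevel sets. -/
lemma lintegral_exp_support (hM : IsCompact M) {z : EuclideanSpace ℝ (Fin d)} (hz : z ∈ M) :
    ∫⁻ y, ENNReal.ofReal (exp (⟪z, y⟫ - supportFn M y)) =
      ENNReal.ofReal (d.factorial) * volume (translatePolar M z) := by
  have hne : M.Nonempty := ⟨z, hz⟩
  set g : EuclideanSpace ℝ (Fin d) → ℝ := fun y => supportFn M y - ⟪z, y⟫ with hg
  have hgm : Measurable g := (measurable_supportFn hM hne).sub (by fun_prop)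
  have hg0 : ∀ y, 0 ≤ g y := fun y => sub_nonneg.2 (inner_le_supportFn hM hz y)
  have hpt : ∀ y, ENNReal.ofReal (exp (⟪z, y⟫ - supportFn M y)) =
      ∫⁻ t in Set.Ioi (0 : ℝ),
        {p : EuclideanSpace ℝ (Fin d) × ℝ | g p.1 ≤ p.2}.indicator
          (fun p => ENNReal.ofReal (exp (-p.2))) (y, t) := by
    intro y
    have h1 : ⟪z, y⟫ - supportFn M y = -g y := by simp [hg]
    rw [h1, ← integral_exp_neg_Ioi, ofReal_integral_eq_lintegral_ofReal
      (integrableOn_exp_neg_Ioi _) (Filter.Eventually.of_forall fun _ => (exp_pos _).le)]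
    rw [setLIntegral_congr Ioi_ae_eq_Ici, setLIntegral_congr Ioi_ae_eq_Ici,
      ← lintegral_indicator measurableSet_Ici, ← lintegral_indicator measurableSet_Ici]
    refine lintegral_congr fun t => ?_
    by_cases ht : g y ≤ t
    · simp [Set.indicator, ht, (hg0 y).trans ht]
    · simp [Set.indicator, ht]
  have hmeas : MeasurableSet {p : EuclideanSpace ℝ (Fin d) × ℝ | g p.1 ≤ p.2} :=
    measurableSet_le (hgm.comp measurable_fst) measurable_snd
  simp_rw [hpt]
  rw [lintegral_lintegral_swap]
  swap
  · exact (Measurable.indicator (by fun_prop) hmeas).aemeasurable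
  have hin : ∀ t ∈ Set.Ioi (0 : ℝ),
      ∫⁻ y, {p : EuclideanSpace ℝ (Fin d) × ℝ | g p.1 ≤ p.2}.indicator
          (fun p => ENNReal.ofReal (exp (-p.2))) (y, t) =
      ENNReal.ofReal (exp (-t) * t ^ ((d + 1 : ℝ) - 1)) * volume (translatePolar M z) := by
    intro t ht
    have ht' : (0 : ℝ) < t := ht
    have hset : MeasurableSet {y | g y ≤ t} := measurableSet_le hgm measurable_const
    calc _ = ∫⁻ y, {y | g y ≤ t}.indicator (fun _ => ENNReal.ofReal (exp (-t))) y := rfl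
      _ = ENNReal.ofReal (exp (-t)) * volume (t • translatePolar M z) := by
        rw [lintegral_indicator_const hset, ← sublevel_eq_smul hM hne z ht']
      _ = _ := by
        rw [Measure.addHaar_smul, finrank_euclideanSpace_fin, abs_of_pos (by positivity),
          add_sub_cancel_right, rpow_natCast, ENNReal.ofReal_mul (exp_pos _).le, mul_assoc]
  rw [setLIntegral_congr_fun measurableSet_Ioi hin, lintegral_mul_const _ (by fun_prop),
    ← ofReal_integral_eq_lintegral_ofReal (GammaIntegral_convergent (by positivity)),
    ← Gamma_eq_integral (by positivity), Gamma_nat_eq_factorial]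
  filter_upwards [ae_restrict_mem measurableSet_Ioi] with t ht
  have : 0 < t := ht
  positivity


lemma integrable_exp_support (hM : IsCompact M) {z : EuclideanSpace ℝ (Fin d)}
    (hz : z ∈ interior M) :
    Integrable (fun y => exp (⟪z, y⟫ - supportFn M y)) := by
  have hz' := interior_subset hz
  have hm := measurable_supportFn hM ⟨z, hz'⟩
  refine ⟨Measurable.aestronglyMeasurable (by fun_prop), ?_⟩
  rw [hasFiniteIntegral_iff_ofReal (Filter.Eventually.of_forall fun _ => (exp_pos _).le),
    lintegral_exp_support hM hz']
  exact ENNReal.mul_lt_top ENNReal.ofReal_lt_top (volume_translatePolar_ne_top hz).lt_top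

lemma integral_exp_support (hM : IsCompact M) {z : EuclideanSpace ℝ (Fin d)}
    (hz : z ∈ interior M) :
    ∫ y, exp (⟪z, y⟫ - supportFn M y) =
      d.factorial * (volume (translatePolar M z)).toReal := by
  rw [integral_eq_lintegral_of_nonneg_ae (Filter.Eventually.of_forall fun _ => (exp_pos _).le)
    (integrable_exp_support hM hz).1, lintegral_exp_support hM (interior_subset hz),
    ENNReal.toReal_mul, ENNReal.toReal_ofReal (by positivity)]

/-! ### Strict convexity -/

lemma strictConvexOn_volume_translatePolar (hM : IsCompact M) (hc : Convex ℝ M) :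
    StrictConvexOn ℝ (interior M) (fun z => (volume (translatePolar M z)).toReal) := by
  refine ⟨hc.interior, fun z₁ h₁ z₂ h₂ hne a b ha hb hab => ?_⟩
  have h₃ : a • z₁ + b • z₂ ∈ interior M := hc.interior h₁ h₂ ha.le hb.le hab
  have i₁ := integrable_exp_support hM h₁
  have i₂ := integrable_exp_support hM h₂
  have i₃ := integrable_exp_support hM h₃
  -- the pointwise convexity defect of the integrand
  set D : EuclideanSpace ℝ (Fin d) → ℝ := fun y =>
    (a * exp (⟪z₁, y⟫ - supportFn M y) + b * exp (⟪z₂, y⟫ - supportFn M y)) -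
      exp (⟪a • z₁ + b • z₂, y⟫ - supportFn M y) with hD
  have harg : ∀ y, ⟪a • z₁ + b • z₂, y⟫ - supportFn M y =
      a * (⟪z₁, y⟫ - supportFn M y) + b * (⟪z₂, y⟫ - supportFn M y) := by
    intro y
    obtain rfl : b = 1 - a := by linarith
    simp only [inner_add_left, real_inner_smul_left]
    ring
  have hpos : ∀ y, ⟪z₁, y⟫ ≠ ⟪z₂, y⟫ → 0 < D y := by
    intro y hy
    have := strictConvexOn_exp.2 (Set.mem_univ (⟪z₁, y⟫ - supportFn M y))
      (Set.mem_univ (⟪z₂, y⟫ - supportFn M y)) (by simpa using hy) ha hb hab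
    simp only [smul_eq_mul] at this
    simp only [hD, harg]
    linarith
  have hnn : 0 ≤ D := by
    intro y
    have := convexOn_exp.2 (Set.mem_univ (⟪z₁, y⟫ - supportFn M y))
      (Set.mem_univ (⟪z₂, y⟫ - supportFn M y)) ha.le hb.le hab
    simp only [smul_eq_mul] at this
    simp only [hD, harg, Pi.zero_apply]
    linarith
  have hDi : Integrable D := ((i₁.const_mul a).add (i₂.const_mul b)).sub i₃
  have hint : 0 < ∫ y, D y := by
    rw [integral_pos_iff_support_of_nonneg hnn hDi]
    have hop : IsOpen {y : EuclideanSpace ℝ (Fin d) | ⟪z₁, y⟫ ≠ ⟪z₂, y⟫} :=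
      isOpen_ne_fun (by fun_prop) (by fun_prop)
    refine (hop.measure_pos volume ⟨z₁ - z₂, ?_⟩).trans_le
      (measure_mono fun y hy => (hpos y hy).ne')
    intro h
    rw [← sub_eq_zero, ← inner_sub_left, inner_self_eq_zero, sub_eq_zero] at h
    exact hne h
  have hval : ∫ y, D y = a * (d.factorial * (volume (translatePolar M z₁)).toReal) +
      b * (d.factorial * (volume (translatePolar M z₂)).toReal) -
      d.factorial * (volume (translatePolar M (a • z₁ + b • z₂))).toReal := by
    have i₁₂ : Integrable (fun y => a * exp (⟪z₁, y⟫ - supportFn M y) +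
        b * exp (⟪z₂, y⟫ - supportFn M y)) := (i₁.const_mul a).add (i₂.const_mul b)
    simp only [hD]
    rw [integral_sub i₁₂ i₃,
      integral_add (i₁.const_mul a) (i₂.const_mul b), integral_const_mul, integral_const_mul,
      integral_exp_support hM h₁, integral_exp_support hM h₂, integral_exp_support hM h₃]
  rw [hval] at hint
  have hf : (0 : ℝ) < d.factorial := by positivity
  simp only [smul_eq_mul]
  refine lt_of_mul_lt_mul_left ?_ hf.le
  linarith

/-! ### Blow-up at the frontier -/

/-- The supporting hyperplane theorem, with a unit outer normal. -/
lemma exists_supporting_unit (hc : Convex ℝ M) (hi : (interior M).Nonempty)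
    {p : EuclideanSpace ℝ (Fin d)} (hp : p ∈ frontier M) :
    ∃ u : EuclideanSpace ℝ (Fin d), ‖u‖ = 1 ∧ ∀ x ∈ M, ⟪x, u⟫ ≤ ⟪p, u⟫ := by
  obtain ⟨f, hf⟩ := geometric_hahn_banach_open_point hc.interior isOpen_interior hp.2
  set v := (InnerProductSpace.toDual ℝ (EuclideanSpace ℝ (Fin d))).symm f with hv
  have hfv : ∀ x, f x = ⟪x, v⟫ := fun x => by
    rw [real_inner_comm, hv, InnerProductSpace.toDual_symm_apply]
  have hv0 : v ≠ 0 := by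
    intro h0
    obtain ⟨x, hx⟩ := hi
    have := hf x hx
    simp [hfv, h0] at this
  have hle : ∀ x ∈ M, f x ≤ f p := by
    intro x hx
    have hx' : x ∈ closure (interior M) := by
      rw [hc.closure_interior_eq_closure_of_nonempty_interior hi]
      exact subset_closure hx
    exact closure_minimal (fun a ha => (hf a ha).le)
      (isClosed_le f.continuous continuous_const) hx'
  have hn : 0 < ‖v‖ := norm_pos_iff.2 hv0
  refine ⟨‖v‖⁻¹ • v, by simp [norm_smul, hn.ne'], fun x hx => ?_⟩
  rw [inner_smul_right, inner_smul_right, ← hfv, ← hfv]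
  exact mul_le_mul_of_nonneg_left (hle x hx) (by positivity)

/-- The number `N` of disjoint balls of radius `r` placed inside the polar is chosen with
`N * V(ball r) > C`; their centres `2 r k u`, `k < N`, satisfy `⟪x - z, 2 r k u⟫ ≤ 1 / 2`. -/
lemma exists_volume_gt_near_frontier (hd : 0 < d) (hM : IsCompact M) (hc : Convex ℝ M)
    (hi : (interior M).Nonempty) (C : ℝ) :
    ∃ δ : ℝ, 0 < δ ∧ ∀ z ∈ interior M, Metric.infDist z (frontier M) < δ →
      C < (volume (translatePolar M z)).toReal := by
  have : Nonempty (Fin d) := ⟨⟨0, hd⟩⟩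
  have hfr : (frontier M).Nonempty := by
    refine nonempty_frontier_iff.2 ⟨hi.mono interior_subset, ?_⟩
    rintro rfl
    exact noncompact_univ _ hM
  obtain ⟨R, hR, hMR⟩ := hM.isBounded.exists_pos_norm_le
  -- `2 * R` bounds the diameter of `M`, so `‖w‖ < r` forces `⟪x - z, w⟫ ≤ 1 / 2`
  set r : ℝ := 1 / (4 * R) with hr
  have hr0 : 0 < r := by positivity
  set v : ℝ := (volume (Metric.ball (0 : EuclideanSpace ℝ (Fin d)) r)).toReal with hv
  have hv0 : 0 < v :=
    ENNReal.toReal_pos (Metric.measure_ball_pos _ _ hr0).ne' measure_ball_lt_top.ne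
  obtain ⟨N, hN⟩ := exists_nat_gt (C / v)
  refine ⟨1 / (4 * r * (N + 1)), by positivity, fun z hz hzd => ?_⟩
  obtain ⟨p, hp, hzp⟩ := (Metric.infDist_lt_iff hfr).1 hzd
  obtain ⟨u, hu1, hu⟩ := exists_supporting_unit hc hi hp
  have hsub : (⋃ k ∈ Finset.range N, Metric.ball ((2 * r * (k : ℝ)) • u) r) ⊆
      translatePolar M z := by
    intro y hy
    simp only [Set.mem_iUnion, Finset.mem_range] at hy
    obtain ⟨k, hk, hy⟩ := hy
    intro x hx
    have hxz : ‖x - z‖ ≤ 2 * R := by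
      linarith [norm_sub_le x z, hMR x hx, hMR z (interior_subset hz)]
    have hw : ⟪x - z, y - (2 * r * (k : ℝ)) • u⟫ ≤ 1 / 2 := by
      refine (real_inner_le_norm _ _).trans ?_
      rw [mem_ball_iff_norm] at hy
      calc _ ≤ 2 * R * r := by gcongr
        _ = 1 / 2 := by rw [hr]; field_simp; norm_num
    have hxu : ⟪x - z, u⟫ ≤ 1 / (4 * r * (N + 1)) := by
      calc ⟪x - z, u⟫ ≤ ⟪p - z, u⟫ := by
            rw [inner_sub_left, inner_sub_left]; linarith [hu x hx]
        _ ≤ ‖p - z‖ * ‖u‖ := real_inner_le_norm _ _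
        _ = dist z p := by rw [hu1, mul_one, dist_eq_norm, norm_sub_rev]
        _ ≤ _ := hzp.le
    have hku : 2 * r * (k : ℝ) * ⟪x - z, u⟫ ≤ 1 / 2 := by
      have hkN : (k : ℝ) ≤ N + 1 := by
        have : (k : ℝ) < N := by exact_mod_cast hk
        linarith
      calc _ ≤ 2 * r * (k : ℝ) * (1 / (4 * r * (N + 1))) := by gcongr
        _ ≤ 2 * r * (N + 1 : ℝ) * (1 / (4 * r * (N + 1))) := by gcongr
        _ = 1 / 2 := by field_simp; norm_num
    rw [inner_sub_right, inner_smul_right] at hw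
    linarith
  have hvol : volume (⋃ k ∈ Finset.range N, Metric.ball ((2 * r * (k : ℝ)) • u) r) =
      N * volume (Metric.ball (0 : EuclideanSpace ℝ (Fin d)) r) := by
    rw [measure_biUnion_finset _ fun k _ => measurableSet_ball]
    · simp [Measure.addHaar_ball_center]
    · intro j _ k _ hjk
      refine Metric.ball_disjoint_ball ?_
      have h1 : (1 : ℝ) ≤ |(j : ℝ) - k| := by
        have : (1 : ℤ) ≤ |(j : ℤ) - k| := Int.one_le_abs (by omega)
        exact_mod_cast this
      rw [dist_eq_norm, ← sub_smul, ← mul_sub, norm_smul, hu1, mul_one, norm_eq_abs, abs_mul,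
        abs_of_pos (by positivity : 0 < 2 * r)]
      nlinarith
  calc C < N * v := (div_lt_iff₀ hv0).1 hN
    _ = (volume (⋃ k ∈ Finset.range N, Metric.ball ((2 * r * (k : ℝ)) • u) r)).toReal := by
      rw [hvol, ENNReal.toReal_mul, ENNReal.toReal_natCast]
    _ ≤ _ := ENNReal.toReal_mono (volume_translatePolar_ne_top hz) (measure_mono hsub)

end

/-! ### Existence and uniqueness of the minimum -/

/-- The function z ↦ V((M − z)*) is strictly convex on the interior of M, tends to +∞
towards the boundary, and attains its minimum at a unique point (the Santaló point). -/
theorem santalo_function_strictConvex_blowup_unique_min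
    (d : ℕ) (hd : 2 ≤ d) (M : Set (EuclideanSpace ℝ (Fin d)))
    (hMcomp : IsCompact M) (hMconv : Convex ℝ M) (hMint : (interior M).Nonempty) :
    StrictConvexOn ℝ (interior M)
      (fun z => (volume (translatePolar M z)).toReal) ∧
    (∀ C : ℝ, 0 < C → ∃ δ : ℝ, 0 < δ ∧ ∀ z ∈ interior M,
      Metric.infDist z (frontier M) < δ →
        C < (volume (translatePolar M z)).toReal) ∧
    (∃! s : EuclideanSpace ℝ (Fin d), s ∈ interior M ∧
      ∀ z ∈ interior M,
        (volume (translatePolar M s)).toReal ≤ (volume (translatePolar M z)).toReal) := by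
  have hconv := strictConvexOn_volume_translatePolar hMcomp hMconv
  have hblow := exists_volume_gt_near_frontier (by omega) hMcomp hMconv hMint
  refine ⟨hconv, fun C _ => hblow C, ?_⟩
  set f : EuclideanSpace ℝ (Fin d) → ℝ := fun z => (volume (translatePolar M z)).toReal
  obtain ⟨z₀, hz₀⟩ := hMint
  obtain ⟨δ, hδ, hfar⟩ := hblow (f z₀)
  -- points of `M` at distance at least `δ` from the frontier; outside this set `f` exceeds `f z₀`
  set K : Set (EuclideanSpace ℝ (Fin d)) := M ∩ {z | δ ≤ Metric.infDist z (frontier M)}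
  have hK : IsCompact K :=
    hMcomp.inter_right (isClosed_le continuous_const (Metric.continuous_infDist_pt _))
  have hKint : K ⊆ interior M := by
    rintro z ⟨hzM, hzd⟩
    by_contra hzi
    have : Metric.infDist z (frontier M) = 0 :=
      Metric.infDist_zero_of_mem ⟨subset_closure hzM, hzi⟩
    exact absurd (this ▸ hzd : δ ≤ 0) hδ.not_ge
  have hz₀K : z₀ ∈ K :=
    ⟨interior_subset hz₀, not_lt.1 fun h => lt_irrefl _ (hfar z₀ hz₀ h)⟩
  have hcont : ContinuousOn f (interior M) := hconv.convexOn.continuousOn isOpen_interior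
  obtain ⟨s, hsK, hs⟩ := hK.exists_isMinOn ⟨z₀, hz₀K⟩ (hcont.mono hKint)
  have hmin : ∀ z ∈ interior M, f s ≤ f z := by
    intro z hz
    by_cases hzK : z ∈ K
    · exact hs hzK
    · have hlt : Metric.infDist z (frontier M) < δ :=
        not_le.1 fun h => hzK ⟨interior_subset hz, h⟩
      exact (hs hz₀K).trans (hfar z hz hlt).le
  exact ⟨s, ⟨hKint hsK, hmin⟩, fun t ht => hconv.eq_of_isMinOn ht.2 hmin ht.1 (hKint hsK)⟩
end
end
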